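/- arXiv:1704.08830 — 6 statements merged into one kernel-verified Lean document; each statement's English description precedes it below -/
import Mathlib

section
/- Let V be a type and D = (V, A) a digraph, where A ⊆ V × V is a set of loop-free arcs. Then A can be partitioned into dicycles (i.e., there is a partition of A each of whose parts is the arc set of a directed cycle of D) if and only if D is balanced, i.e., for every subset X ⊆ V the cardinality of the set of ingoing arcs of X equals the cardinality of the set of outgoing arcs of X. -/
/-!
A dicycle crosses every cut equally often in both directions, which gives one implication. For the
other one, a nonempty balanced digraph without loops contains a dicycle, and deleting finitely many
dicycles preserves balance; deleting infinitely many may not.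

For infinite `κ`, deleting a set `B` of fewer than `κ` arcs from a balanced digraph preserves
balance if any two end vertices of `B` separated by a cut of size `< κ` are also separated by a cut
inside `B`. Indeed, a weak component of the rest meets `B` on at most one side of any cut of size
`< κ`, so the arcs of such a cut in this component form a cut of the whole digraph, while the size
of a larger cut does not change.

By induction on `κ`, any set `S` of fewer than `κ` arcs can be covered by fewer than `κ` arcs that
can be partitioned into dicycles and deleted without destroying balance: remove such sets of size
less than `|S|` one after another, and let them absorb `S` and the minimum cuts between the vertices
met so far little by little. Every limit stage then satisfies the condition above.
-/

/-- The set of arcs of `A` going out of the vertex set `X`. -/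
def outArcs {V : Type*} (A : Set (V × V)) (X : Set V) : Set (V × V) :=
  {e ∈ A | e.1 ∈ X ∧ e.2 ∉ X}

/-- The set of arcs of `A` going into the vertex set `X`. -/
def inArcs {V : Type*} (A : Set (V × V)) (X : Set V) : Set (V × V) :=
  {e ∈ A | e.1 ∉ X ∧ e.2 ∈ X}

/-- A digraph (given by its arc set `A`) is balanced if for each vertex set the
cardinalities of the ingoing and the outgoing arcs coincide. -/
def IsBalanced {V : Type*} (A : Set (V × V)) : Prop :=
  ∀ X : Set V, Cardinal.mk (inArcs A X) = Cardinal.mk (outArcs A X)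

/-- `C` is (the arc set of) a directed cycle of the digraph with arc set `A`. -/
def IsDicycle {V : Type*} (A : Set (V × V)) (C : Set (V × V)) : Prop :=
  ∃ (n : ℕ) (f : ZMod n → V), 2 ≤ n ∧ Function.Injective f ∧
    C = {p | ∃ i : ZMod n, p = (f i, f (i + 1))} ∧ C ⊆ A

/-- `P` is a partition of the arc set `A` into dicycles. -/
def IsDicyclePartition {V : Type*} (A : Set (V × V)) (P : Set (Set (V × V))) : Prop :=
  (∀ C ∈ P, IsDicycle A C) ∧ P.PairwiseDisjoint id ∧ ⋃₀ P = A

open Cardinal Order Relation Function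

universe u

section Cuts

variable {V : Type u} {A B D : Set (V × V)}

lemma inArcs_compl (A : Set (V × V)) (X : Set V) : inArcs A Xᶜ = outArcs A X := by
  ext e
  simp [inArcs, outArcs]

lemma outArcs_compl (A : Set (V × V)) (X : Set V) : outArcs A Xᶜ = inArcs A X := by
  rw [← inArcs_compl, compl_compl]

lemma mk_inArcs_diff_add (hBD : B ⊆ D) (X : Set V) :
    #(inArcs (D \ B) X) + #(inArcs B X) = #(inArcs D X) := by
  have hdiff : inArcs (D \ B) X = inArcs D X \ inArcs B X := by
    ext e
    simp only [inArcs, Set.mem_ofPred_eq, Set.mem_sdiff]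
    tauto
  rw [hdiff]
  exact mk_sdiff_add_mk fun e he => ⟨hBD he.1, he.2⟩

lemma mk_outArcs_diff_add (hBD : B ⊆ D) (X : Set V) :
    #(outArcs (D \ B) X) + #(outArcs B X) = #(outArcs D X) := by
  simpa only [inArcs_compl] using mk_inArcs_diff_add hBD Xᶜ

lemma mk_inArcs_iUnion {ι : Type u} {A : ι → Set (V × V)} (hA : Pairwise (Disjoint on A))
    (X : Set V) : #(inArcs (⋃ i, A i) X) = Cardinal.sum fun i => #(inArcs (A i) X) := by
  have hU : inArcs (⋃ i, A i) X = ⋃ i, inArcs (A i) X := by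
    ext e
    simp only [inArcs, Set.mem_ofPred_eq, Set.mem_iUnion, exists_and_right]
  rw [hU]
  exact mk_iUnion_eq_sum_mk fun i j hij => (hA hij).mono (Set.sep_subset _ _) (Set.sep_subset _ _)

lemma mk_inArcs_iUnion_eq_mk_outArcs_iUnion {ι : Type u} {A : ι → Set (V × V)}
    (hA : Pairwise (Disjoint on A)) {X : Set V} (h : ∀ i, #(inArcs (A i) X) = #(outArcs (A i) X)) :
    #(inArcs (⋃ i, A i) X) = #(outArcs (⋃ i, A i) X) := by
  rw [← inArcs_compl, mk_inArcs_iUnion hA, mk_inArcs_iUnion hA]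
  simp only [h, inArcs_compl]

lemma IsBalanced.diff_finite (hD : IsBalanced D) (hB : IsBalanced B) (hBD : B ⊆ D)
    (hfin : B.Finite) : IsBalanced (D \ B) := by
  intro X
  have hadd : #(inArcs (D \ B) X) + #(inArcs B X) = #(outArcs (D \ B) X) + #(inArcs B X) := by
    rw [mk_inArcs_diff_add hBD, hB X, mk_outArcs_diff_add hBD, hD X]
  exact Cardinal.eq_of_add_eq_add_right hadd (hfin.subset (Set.sep_subset _ _)).lt_aleph0

end Cuts

section Dicycles

variable {V : Type u} {A B C D : Set (V × V)}

lemma IsDicycle.finite (hC : IsDicycle D C) : C.Finite := by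
  obtain ⟨n, f, hn, -, rfl, -⟩ := hC
  have : NeZero n := ⟨by omega⟩
  simpa only [eq_comm, Set.range] using Set.finite_range fun i : ZMod n => (f i, f (i + 1))

lemma IsDicycle.subset (hC : IsDicycle D C) : C ⊆ D := by
  obtain ⟨n, f, -, -, -, h⟩ := hC
  exact h

lemma IsDicycle.of_subset (hC : IsDicycle D C) (hCB : C ⊆ B) : IsDicycle B C := by
  obtain ⟨n, f, hn, hf, hCf, -⟩ := hC
  exact ⟨n, f, hn, hf, hCf, hCB⟩

/-- Arcs with both ends in `X` are counted on both sides. -/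
lemma mk_inArcs_eq_mk_outArcs_of_finite (hA : A.Finite) {X : Set V}
    (h : #{e ∈ A | e.2 ∈ X} = #{e ∈ A | e.1 ∈ X}) : #(inArcs A X) = #(outArcs A X) := by
  set I : Set (V × V) := {e ∈ A | e.1 ∈ X ∧ e.2 ∈ X}
  have hin : inArcs A X = {e ∈ A | e.2 ∈ X} \ I := by
    ext e
    simp only [inArcs, I, Set.mem_ofPred_eq, Set.mem_sdiff]
    tauto
  have hout : outArcs A X = {e ∈ A | e.1 ∈ X} \ I := by
    ext e
    simp only [outArcs, I, Set.mem_ofPred_eq, Set.mem_sdiff]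
    tauto
  have hadd : #(inArcs A X) + #I = #(outArcs A X) + #I := by
    have hIheads : I ⊆ {e ∈ A | e.2 ∈ X} := fun e he => ⟨he.1, he.2.2⟩
    have hItails : I ⊆ {e ∈ A | e.1 ∈ X} := fun e he => ⟨he.1, he.2.1⟩
    rw [hin, hout, mk_sdiff_add_mk hIheads, mk_sdiff_add_mk hItails, h]
  exact Cardinal.eq_of_add_eq_add_right hadd (hA.subset (Set.sep_subset _ _)).lt_aleph0

lemma IsDicycle.balanced (hC : IsDicycle D C) : IsBalanced C := by
  refine fun X => mk_inArcs_eq_mk_outArcs_of_finite hC.finite ?_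
  obtain ⟨n, f, -, hf, rfl, -⟩ := hC
  let arc : ZMod n → V × V := fun i => (f i, f (i + 1))
  have harc : Injective arc := fun i j hij => hf (congrArg Prod.fst hij)
  have hcount (T : Set (V × V)) :
      lift.{0} #{e ∈ {p | ∃ i, p = arc i} | e ∈ T} = lift.{u} #(arc ⁻¹' T) := by
    rw [← mk_image_eq_lift arc _ harc, Set.image_preimage_eq_range_inter]
    simp only [Set.range, eq_comm, Set.inter_def, Set.mem_ofPred_eq]
  have hshift : #{i | f (i + 1) ∈ X} = #{i | f i ∈ X} :=
    mk_preimage_equiv (Equiv.addRight 1) {i | f i ∈ X}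
  rw [← lift_inj.{u, 0}]
  exact (hcount {e | e.2 ∈ X}).trans ((congrArg lift hshift).trans (hcount {e | e.1 ∈ X}).symm)

lemma exists_nodup_relSeries {a b : V} (h : ReflTransGen (fun v w => (v, w) ∈ D) a b) :
    ∃ p : RelSeries D, p.head = a ∧ p.last = b ∧ p.toList.Nodup := by
  induction h with
  | refl => exact ⟨.singleton D a, by simp, by simp, by simp⟩
  | @tail b c _ hbc ih =>
    obtain ⟨p, rfl, rfl, hp⟩ := ih
    by_cases hc : c ∈ p
    · obtain ⟨i, rfl⟩ := hc
      refine ⟨p.take i, p.head_take i, p.last_take i, ?_⟩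
      rw [RelSeries.toList, List.nodup_ofFn] at hp ⊢
      exact hp.comp (Fin.castLE_injective (Nat.succ_le_succ i.is_le))
    · refine ⟨p.snoc c hbc, by simp, by simp, ?_⟩
      rw [RelSeries.toList_snoc, List.nodup_append]
      simpa [hp] using fun v hv => ne_of_mem_of_not_mem (RelSeries.mem_toList.1 hv) hc

lemma exists_dicycle_of_relSeries (p : RelSeries D) (hp : p.toList.Nodup)
    (hclose : (p.last, p.head) ∈ D) (hne : p.last ≠ p.head) :
    ∃ C, IsDicycle D C ∧ (p.last, p.head) ∈ C := by
  have hlen : p.length ≠ 0 := fun h0 => hne (congrArg p (Fin.ext h0))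
  -- `ZMod (n + 1)` unfolds to `Fin (n + 1)`
  let f : ZMod (p.length + 1) → V := p.toFun
  have hf : Injective f := List.nodup_ofFn.1 hp
  have harc : ∀ i : Fin (p.length + 1), (p i, p (i + 1)) ∈ D := by
    refine Fin.lastCases ?_ fun i => ?_
    · rwa [Fin.last_add_one]
    · simpa only [Fin.coeSucc_eq_succ] using p.step i
  refine ⟨{e | ∃ i : ZMod (p.length + 1), e = (f i, f (i + 1))},
    ⟨p.length + 1, f, by omega, hf, rfl, ?_⟩, Fin.last p.length, ?_⟩
  · rintro e ⟨i, rfl⟩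
    exact harc i
  · exact congrArg (fun j => (p.last, p j)) (Fin.last_add_one p.length).symm

/-- Nothing leaves the set of vertices reachable from the head of `e`, hence nothing enters it. -/
lemma IsBalanced.reflTransGen_of_mem (hD : IsBalanced D) {e : V × V} (he : e ∈ D) :
    ReflTransGen (fun v w => (v, w) ∈ D) e.2 e.1 := by
  let X : Set V := {w | ReflTransGen (fun v w => (v, w) ∈ D) e.2 w}
  have hout : outArcs D X = ∅ :=
    Set.eq_empty_of_forall_notMem fun a ha => ha.2.2 (ReflTransGen.tail ha.2.1 ha.1)
  have hin : inArcs D X = ∅ := by rw [← mk_set_eq_zero_iff, hD X, hout, mk_eq_zero]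
  by_contra htail
  exact hin.subset (show e ∈ inArcs D X from ⟨he, htail, ReflTransGen.refl⟩)

lemma IsBalanced.exists_dicycle (hD : IsBalanced D) {e : V × V} (he : e ∈ D) (hne : e.1 ≠ e.2) :
    ∃ C, IsDicycle D C ∧ e ∈ C := by
  obtain ⟨v, w⟩ := e
  obtain ⟨p, rfl, rfl, hp⟩ := exists_nodup_relSeries (hD.reflTransGen_of_mem he)
  exact exists_dicycle_of_relSeries p hp he hne

lemma IsDicyclePartition.balanced {P : Set (Set (V × V))} (hP : IsDicyclePartition A P) :
    IsBalanced A := by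
  obtain ⟨hdicycle, hdisj, rfl⟩ := hP
  intro X
  rw [Set.sUnion_eq_iUnion]
  exact mk_inArcs_iUnion_eq_mk_outArcs_iUnion
    (hdisj.on_injective Subtype.coe_injective Subtype.coe_prop)
    fun C => (hdicycle C.1 C.2).balanced X

end Dicycles

section Removable

variable {V : Type u} {B C D S : Set (V × V)}

/-- The arc set `C` can be partitioned into dicycles. -/
def Partitionable (C : Set (V × V)) : Prop := ∃ P, IsDicyclePartition C P

lemma partitionable_iUnion {ι : Type*} {E : ι → Set (V × V)} (hE : ∀ i, Partitionable (E i))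
    (hdisj : Pairwise (Disjoint on E)) : Partitionable (⋃ i, E i) := by
  choose P hP using hE
  refine ⟨⋃ i, P i, fun C hC => ?_, fun C hC C' hC' hne => ?_, ?_⟩
  · obtain ⟨i, hi⟩ := Set.mem_iUnion.1 hC
    have hCi := (hP i).1 C hi
    exact hCi.of_subset (hCi.subset.trans (Set.subset_iUnion E i))
  · obtain ⟨i, hi⟩ := Set.mem_iUnion.1 hC
    obtain ⟨j, hj⟩ := Set.mem_iUnion.1 hC'
    rcases eq_or_ne i j with rfl | hij
    · exact (hP i).2.1 hi hj hne
    · exact (hdisj hij).mono ((hP i).1 C hi).subset ((hP j).1 C' hj).subset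
  · rw [Set.sUnion_iUnion]
    exact Set.iUnion_congr fun i => (hP i).2.2

lemma Partitionable.union (hB : Partitionable B) (hC : Partitionable C) (hBC : Disjoint B C) :
    Partitionable (B ∪ C) := by
  rw [Set.union_eq_iUnion]
  refine partitionable_iUnion (Bool.forall_bool.2 ⟨hC, hB⟩) ?_
  rintro (_ | _) (_ | _) hne
  exacts [absurd rfl hne, hBC.symm, hBC, absurd rfl hne]

lemma partitionable_empty : Partitionable (∅ : Set (V × V)) :=
  ⟨∅, by simp, Set.pairwiseDisjoint_empty, Set.sUnion_empty⟩

lemma IsDicycle.partitionable (hC : IsDicycle D C) : Partitionable C :=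
  ⟨{C}, by rintro _ rfl; exact hC.of_subset subset_rfl, Set.pairwiseDisjoint_singleton _ _,
    Set.sUnion_singleton _⟩

/-- `C` is a set of arcs of `D` that can be partitioned into dicycles and whose deletion leaves a
balanced digraph; these are the pieces from which a partition of `D` is assembled. -/
structure Removable (D C : Set (V × V)) : Prop where
  subset : C ⊆ D
  partitionable : Partitionable C
  balanced_diff : IsBalanced (D \ C)

lemma IsBalanced.removable_empty (hD : IsBalanced D) : Removable D ∅ :=
  ⟨Set.empty_subset D, partitionable_empty, by rwa [Set.sdiff_empty]⟩

lemma IsBalanced.removable_of_isDicycle (hD : IsBalanced D) (hC : IsDicycle D C) :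
    Removable D C :=
  ⟨hC.subset, hC.partitionable, hD.diff_finite hC.balanced hC.subset hC.finite⟩

lemma Removable.union (hB : Removable D B) (hC : Removable (D \ B) C) : Removable D (B ∪ C) where
  subset := Set.union_subset hB.subset (hC.subset.trans Set.sdiff_subset)
  partitionable := hB.partitionable.union hC.partitionable
    (Set.disjoint_sdiff_right.mono_right hC.subset)
  balanced_diff := by
    rw [← Set.sdiff_sdiff]
    exact hC.balanced_diff

lemma IsBalanced.exists_finite_removable (hD : IsBalanced D) (hloop : ∀ e ∈ D, e.1 ≠ e.2)
    (hS : S.Finite) (hSD : S ⊆ D) : ∃ C, S ⊆ C ∧ C.Finite ∧ Removable D C := by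
  induction S, hS using Set.Finite.induction_on with
  | empty => exact ⟨∅, subset_rfl, Set.finite_empty, hD.removable_empty⟩
  | @insert e S _ _ ih =>
    rw [Set.insert_subset_iff] at hSD
    obtain ⟨C, hSC, hCfin, hC⟩ := ih hSD.2
    by_cases heC : e ∈ C
    · exact ⟨C, Set.insert_subset heC hSC, hCfin, hC⟩
    obtain ⟨Z, hZ, heZ⟩ := hC.balanced_diff.exists_dicycle ⟨hSD.1, heC⟩ (hloop e hSD.1)
    exact ⟨C ∪ Z, Set.insert_subset (Or.inr heZ) (hSC.trans Set.subset_union_left),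
      hCfin.union hZ.finite, hC.union (hC.balanced_diff.removable_of_isDicycle hZ)⟩

end Removable

section CutClosed

variable {V : Type u} {A B D : Set (V × V)}

/-- The arcs of `D` with exactly one end in `X`, in either direction. -/
def cutArcs (D : Set (V × V)) (X : Set V) : Set (V × V) := inArcs D X ∪ outArcs D X

/-- The vertices incident with an arc of `B`. -/
def endVertices (B : Set (V × V)) : Set V := Prod.fst '' B ∪ Prod.snd '' B

lemma endVertices_mono : Monotone (endVertices (V := V)) := fun _ _ h =>
  Set.union_subset_union (Set.image_mono h) (Set.image_mono h)

/-- `B` is closed under small cuts of `D`: any two end vertices of `B` that some cut of `D` with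
fewer than `κ` outgoing arcs separates are also separated by a cut all of whose arcs lie in `B`. -/
def CutClosed (κ : Cardinal.{u}) (D B : Set (V × V)) : Prop :=
  ∀ u ∈ endVertices B, ∀ v ∈ endVertices B, ∀ X, u ∈ X → v ∉ X → #(outArcs D X) < κ →
    ∃ Y, u ∈ Y ∧ v ∉ Y ∧ cutArcs D Y ⊆ B

/-- The weakly connected component of the vertex `v` in the digraph `A`. -/
def weakComponent (A : Set (V × V)) (v : V) : Quot fun v w => (v, w) ∈ A := Quot.mk _ v

/-- The arcs of the weakly connected component `q` of `A`. -/
def componentArcs (A : Set (V × V)) (q : Quot fun v w => (v, w) ∈ A) : Set (V × V) :=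
  {e ∈ A | weakComponent A e.1 = q}

lemma weakComponent_fst_eq_snd {e : V × V} (he : e ∈ A) :
    weakComponent A e.1 = weakComponent A e.2 :=
  Quot.sound he

lemma mem_iff_mem_of_cutArcs_eq_empty {X : Set V} (hX : cutArcs A X = ∅) {v w : V}
    (hvw : weakComponent A v = weakComponent A w) : v ∈ X ↔ w ∈ X := by
  have hside (a b : V) (hab : (a, b) ∈ A) : (a ∈ X) = (b ∈ X) := by
    have hnot : (a, b) ∉ cutArcs A X := by simp [hX]
    simp only [cutArcs, inArcs, outArcs, Set.mem_union, Set.mem_ofPred_eq, hab] at hnot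
    exact propext (by tauto)
  exact iff_of_eq (congrArg (Quot.lift (· ∈ X) hside) hvw)

lemma iUnion_componentArcs (A : Set (V × V)) : ⋃ q, componentArcs A q = A := by
  ext e
  simp [componentArcs]

lemma pairwise_disjoint_componentArcs (A : Set (V × V)) :
    Pairwise (Disjoint on componentArcs A) := fun _ _ hne =>
  Set.disjoint_left.2 fun _ he he' => hne (he.2.symm.trans he'.2)

lemma inArcs_componentArcs_diff {q} {X : Set V}
    (hq : ∀ v ∈ endVertices B, weakComponent (D \ B) v = q → v ∉ X) :
    inArcs (componentArcs (D \ B) q) X = inArcs D {v ∈ X | weakComponent (D \ B) v = q} := by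
  ext e
  constructor
  · rintro ⟨⟨he, rfl⟩, htail, hhead⟩
    exact ⟨he.1, fun h => htail h.1, hhead, (weakComponent_fst_eq_snd he).symm⟩
  · rintro ⟨he, htail, hhead, hcomp⟩
    have heB : e ∉ B := fun h => hq e.2 (Or.inr ⟨e, h, rfl⟩) hcomp hhead
    have hcomp' := (weakComponent_fst_eq_snd (A := D \ B) ⟨he, heB⟩).trans hcomp
    exact ⟨⟨⟨he, heB⟩, hcomp'⟩, fun h => htail ⟨h, hcomp'⟩, hhead⟩

lemma outArcs_componentArcs_diff {q} {X : Set V}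
    (hq : ∀ v ∈ endVertices B, weakComponent (D \ B) v = q → v ∉ X) :
    outArcs (componentArcs (D \ B) q) X = outArcs D {v ∈ X | weakComponent (D \ B) v = q} := by
  ext e
  constructor
  · rintro ⟨⟨he, hcomp⟩, htail, hhead⟩
    exact ⟨he.1, ⟨htail, hcomp⟩, fun h => hhead h.1⟩
  · rintro ⟨he, ⟨htail, hcomp⟩, hhead⟩
    have heB : e ∉ B := fun h => hq e.1 (Or.inl ⟨e, h, rfl⟩) hcomp htail
    have hcomp' := (weakComponent_fst_eq_snd (A := D \ B) ⟨he, heB⟩).symm.trans hcomp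
    exact ⟨⟨⟨he, heB⟩, hcomp⟩, htail, fun h => hhead ⟨h, hcomp'⟩⟩

lemma IsBalanced.mk_inArcs_componentArcs_diff (hD : IsBalanced D) {q} {X : Set V}
    (hq : ∀ v ∈ endVertices B, weakComponent (D \ B) v = q → v ∉ X) :
    #(inArcs (componentArcs (D \ B) q) X) = #(outArcs (componentArcs (D \ B) q) X) := by
  rw [inArcs_componentArcs_diff hq, outArcs_componentArcs_diff hq, hD]

lemma mk_outArcs_diff_eq (hBD : B ⊆ D) {X : Set V} (hX : ℵ₀ ≤ #(outArcs D X))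
    (hB : #B < #(outArcs D X)) : #(outArcs (D \ B) X) = #(outArcs D X) :=
  Cardinal.eq_of_add_eq_of_aleph0_le ((add_comm _ _).trans (mk_outArcs_diff_add hBD X))
    ((mk_le_mk_of_subset (Set.sep_subset _ _)).trans_lt hB) hX

lemma IsBalanced.mk_inArcs_diff_eq (hD : IsBalanced D) (hBD : B ⊆ D) {X : Set V}
    (hX : ℵ₀ ≤ #(outArcs D X)) (hB : #B < #(outArcs D X)) :
    #(inArcs (D \ B) X) = #(outArcs (D \ B) X) := by
  rw [mk_outArcs_diff_eq hBD hX hB, ← outArcs_compl, mk_outArcs_diff_eq hBD, outArcs_compl, hD]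
  all_goals rwa [outArcs_compl, hD]

/-- In a weakly connected component of `D \ B`, all end vertices of `B` are on the same side of a
small cut, so the arcs of the cut in this component form a cut of `D`, up to complementation. -/
theorem IsBalanced.diff_of_cutClosed {κ : Cardinal.{u}} (hκ : ℵ₀ ≤ κ) (hD : IsBalanced D)
    (hBD : B ⊆ D) (hB : #B < κ) (hcl : CutClosed κ D B) : IsBalanced (D \ B) := by
  intro X
  rcases le_or_gt κ #(outArcs D X) with hX | hX
  · exact hD.mk_inArcs_diff_eq hBD (hκ.trans hX) (hB.trans_le hX)
  rw [← iUnion_componentArcs (D \ B)]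
  refine mk_inArcs_iUnion_eq_mk_outArcs_iUnion (pairwise_disjoint_componentArcs _) fun q => ?_
  by_cases hin : ∃ u ∈ endVertices B, weakComponent (D \ B) u = q ∧ u ∈ X
  · obtain ⟨u, huB, huq, huX⟩ := hin
    have hsame : ∀ v ∈ endVertices B, weakComponent (D \ B) v = q → v ∉ Xᶜ := by
      intro v hvB hvq hvX
      obtain ⟨Y, huY, hvY, hYB⟩ := hcl u huB v hvB X huX hvX hX
      have hYempty : cutArcs (D \ B) Y = ∅ := by
        refine Set.eq_empty_of_forall_notMem ?_
        rintro e (he | he)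
        · exact he.1.2 (hYB (Or.inl ⟨he.1.1, he.2⟩))
        · exact he.1.2 (hYB (Or.inr ⟨he.1.1, he.2⟩))
      exact hvY ((mem_iff_mem_of_cutArcs_eq_empty hYempty (huq.trans hvq.symm)).1 huY)
    have hcompl := hD.mk_inArcs_componentArcs_diff hsame
    rwa [inArcs_compl, outArcs_compl, eq_comm] at hcompl
  · push Not at hin
    exact hD.mk_inArcs_componentArcs_diff hin

end CutClosed

section Cardinals

variable {α : Type u}

/-- The least infinite regular cardinal above `c`. -/
noncomputable def regularSucc (c : Cardinal.{u}) : Cardinal.{u} := max ℵ₀ (succ c)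

lemma aleph0_le_regularSucc (c : Cardinal.{u}) : ℵ₀ ≤ regularSucc c := le_max_left _ _

lemma lt_regularSucc (c : Cardinal.{u}) : c < regularSucc c :=
  (lt_succ c).trans_le (le_max_right _ _)

lemma regularSucc_mono : Monotone (regularSucc.{u}) := fun _ _ h =>
  max_le_max_left _ (succ_le_succ h)

lemma isRegular_regularSucc (c : Cardinal.{u}) : (regularSucc c).IsRegular := by
  rcases lt_or_ge c ℵ₀ with hc | hc
  · rw [regularSucc, max_eq_left (succ_le_of_lt hc)]
    exact isRegular_aleph0
  · rw [regularSucc, max_eq_right (hc.trans (le_succ c))]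
    exact isRegular_succ hc

lemma lt_regularSucc_iff {a c : Cardinal.{u}} (hc : ℵ₀ ≤ c) : a < regularSucc c ↔ a ≤ c := by
  rw [regularSucc, max_eq_right (hc.trans (le_succ c)), lt_succ_iff]

lemma mk_iUnion_lt_of_isRegular {κ : Cardinal.{u}} (hκ : κ.IsRegular) {o : Ordinal.{u}}
    (ho : o.card < κ) {E : Ordinal.{u} → Set α} (hE : ∀ m < o, #(E m) < κ) :
    #(⋃ m < o, E m) < κ := by
  have hU : ⋃ m < o, E m = ⋃ i : o.ToType, E (Ordinal.ToType.mk.symm i) := by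
    simp_rw [← Set.mem_Iio, Set.biUnion_eq_iUnion]
    exact (Ordinal.ToType.mk.symm.surjective.iUnion_comp fun m : Set.Iio o => E m).symm
  rw [hU, card_iUnion_lt_iff_forall_of_isRegular hκ (by rwa [mk_toType])]
  exact fun i => hE _ (Ordinal.ToType.mk.symm i).2

lemma exists_injOn_ordinal (Z : Set α) :
    ∃ rank : α → Ordinal.{u}, Set.InjOn rank Z ∧ ∀ z ∈ Z, rank z < (#Z).ord := by
  have hcard : lift.{u + 1} #Z = lift.{u} #(Set.Iio (#Z).ord) := by
    rw [mk_Iio_ordinal, card_ord, lift_lift]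
  obtain ⟨f⟩ := lift_mk_eq'.1 hcard
  classical
  refine ⟨fun z => if hz : z ∈ Z then f ⟨z, hz⟩ else 0, fun y hy z hz hyz => ?_, fun z hz => ?_⟩
  · simpa [hy, hz, Subtype.coe_inj] using hyz
  · exact (dif_pos hz).trans_lt (f ⟨z, hz⟩).2

/-- The elements of `Z` at the positions below `o` in an enumeration of `Z` of order type
`(#Z).ord`, fixed by choice. -/
noncomputable def firstElems (Z : Set α) (o : Ordinal.{u}) : Set α :=
  {z ∈ Z | (exists_injOn_ordinal Z).choose z < o}

lemma mk_firstElems_le (Z : Set α) (o : Ordinal.{u}) : #(firstElems Z o) ≤ o.card := by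
  obtain ⟨hinj, -⟩ := (exists_injOn_ordinal Z).choose_spec
  have hle : lift.{u + 1} #(firstElems Z o) ≤ lift.{u} #(Set.Iio o) := by
    rw [← mk_image_eq_of_injOn_lift _ (firstElems Z o) (hinj.mono (Set.sep_subset _ _)), lift_le]
    exact mk_le_mk_of_subset (Set.image_subset_iff.2 fun z hz => hz.2)
  rwa [mk_Iio_ordinal, lift_lift, lift_le] at hle

lemma firstElems_mono (Z : Set α) : Monotone (firstElems Z) :=
  fun _ _ h _ hz => ⟨hz.1, hz.2.trans_le h⟩

lemma exists_mem_firstElems {Z : Set α} {o : Ordinal.{u}} (ho : IsSuccLimit o)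
    (hZ : #Z ≤ o.card) {z : α} (hz : z ∈ Z) : ∃ m < o, z ∈ firstElems Z m := by
  have hlt := ((exists_injOn_ordinal Z).choose_spec.2 z hz).trans_le (ord_le.2 hZ)
  exact ⟨_, ho.succ_lt hlt, hz, lt_succ _⟩

end Cardinals

section RemovalSequence

variable {V : Type u} {B D S : Set (V × V)}

lemma exists_minCut (D : Set (V × V)) (u v : V) : ∃ Y, ∀ X, u ∈ X → v ∉ X →
    u ∈ Y ∧ v ∉ Y ∧ #(outArcs D Y) ≤ #(outArcs D X) := by
  let separating : Set (Set V) := {X | u ∈ X ∧ v ∉ X}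
  let size : Set V → Cardinal.{u} := fun X => #(outArcs D X)
  rcases separating.eq_empty_or_nonempty with h | h
  · exact ⟨∅, fun X hu hv => absurd (show X ∈ separating from ⟨hu, hv⟩) (h ▸ Set.notMem_empty X)⟩
  · obtain ⟨hu, hv⟩ := argminOn_mem size separating h
    exact ⟨_, fun X hX hX' => ⟨hu, hv, argminOn_le size separating ⟨hX, hX'⟩⟩⟩

/-- A vertex set containing `u` but not `v` with the fewest outgoing arcs in `D`, fixed by choice;
it is arbitrary when `u = v`. -/
noncomputable def minCut (D : Set (V × V)) (u v : V) : Set V := (exists_minCut D u v).choose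

lemma minCut_spec {u v : V} {X : Set V} (hu : u ∈ X) (hv : v ∉ X) :
    u ∈ minCut D u v ∧ v ∉ minCut D u v ∧ #(outArcs D (minCut D u v)) ≤ #(outArcs D X) :=
  (exists_minCut D u v).choose_spec X hu hv

lemma IsBalanced.mk_cutArcs_minCut_lt (hD : IsBalanced D) {κ : Cardinal.{u}} (hκ : ℵ₀ ≤ κ)
    {u v : V} {X : Set V} (hu : u ∈ X) (hv : v ∉ X) (hX : #(outArcs D X) < κ) :
    #(cutArcs D (minCut D u v)) < κ := by
  have hout := (minCut_spec hu hv).2.2.trans_lt hX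
  exact (mk_union_le _ _).trans_lt (add_lt_of_lt hκ ((hD _).trans_lt hout) hout)

/-- The elements to be included at step `m`, when `B` has already been removed: initial segments of
`S` and of a minimum cut between any two end vertices of `B`. -/
def demand (D S : Set (V × V)) (m : Ordinal.{u}) (B : Set (V × V)) : Set (V × V) :=
  firstElems S m ∪
    ⋃ u ∈ endVertices B, ⋃ v ∈ endVertices B, firstElems (cutArcs D (minCut D u v)) m

lemma mk_demand_lt {m : Ordinal.{u}} (hB : #B < regularSucc m.card) :
    #(demand D S m B) < regularSucc m.card := by
  have hκ := aleph0_le_regularSucc m.card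
  have hfirst (Z : Set (V × V)) : #(firstElems Z m) < regularSucc m.card :=
    (mk_firstElems_le Z m).trans_lt (lt_regularSucc _)
  have hend : #(endVertices B) < regularSucc m.card :=
    (mk_union_le _ _).trans_lt
      (add_lt_of_lt hκ (mk_image_le.trans_lt hB) (mk_image_le.trans_lt hB))
  have hunion {f : V → Set (V × V)} (hf : ∀ v, #(f v) < regularSucc m.card) :
      #(⋃ v ∈ endVertices B, f v) < regularSucc m.card :=
    (card_biUnion_lt_iff_forall_of_isRegular (isRegular_regularSucc _) hend).2 fun v _ => hf v
  exact (mk_union_le _ _).trans_lt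
    (add_lt_of_lt hκ (hfirst S) (hunion fun _ => hunion fun _ => hfirst _))

/-- `E` is a legitimate piece to remove from `D` at step `m` of the transfinite construction, when
`B` has already been removed. -/
structure IsRemovalStep (D S : Set (V × V)) (m : Ordinal.{u}) (B E : Set (V × V)) : Prop where
  removable : Removable (D \ B) E
  demand_subset : demand D S m B ∩ D ⊆ B ∪ E
  mk_lt : #E < regularSucc m.card

/-- The arcs removed before step `m`. -/
def removedBefore (E : Ordinal.{u} → Set (V × V)) (m : Ordinal.{u}) : Set (V × V) := ⋃ k < m, E k

/-- The sets `E m` with `m < o` are pieces removed one after another from `D`. -/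
def IsRemovalSequence (D S : Set (V × V)) (E : Ordinal.{u} → Set (V × V)) (o : Ordinal.{u}) :
    Prop :=
  ∀ m < o, IsRemovalStep D S m (removedBefore E m) (E m)

variable {E : Ordinal.{u} → Set (V × V)} {m o : Ordinal.{u}}

lemma mem_removedBefore {e : V × V} : e ∈ removedBefore E o ↔ ∃ m < o, e ∈ E m := by
  simp [removedBefore]

lemma removedBefore_mono : Monotone (removedBefore E) :=
  fun _ _ h => Set.biUnion_subset_biUnion_left fun _ hk => lt_of_lt_of_le hk h

lemma subset_removedBefore (hm : m < o) : E m ⊆ removedBefore E o :=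
  Set.subset_biUnion_of_mem (u := E) hm

lemma removedBefore_succ : removedBefore E (succ m) = removedBefore E m ∪ E m := by
  ext e
  simp only [mem_removedBefore, lt_succ_iff_eq_or_lt, Set.mem_union, or_and_right, exists_or,
    exists_eq_left, or_comm]

lemma exists_mem_endVertices_removedBefore (ho : IsSuccLimit o) {v : V}
    (hv : v ∈ endVertices (removedBefore E o)) :
    ∃ m < o, v ∈ endVertices (removedBefore E m) := by
  rcases hv with ⟨e, he, hev⟩ | ⟨e, he, hev⟩ <;> obtain ⟨k, hk, hek⟩ := mem_removedBefore.1 he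
  · exact ⟨succ k, ho.succ_lt hk, Or.inl ⟨e, subset_removedBefore (lt_succ k) hek, hev⟩⟩
  · exact ⟨succ k, ho.succ_lt hk, Or.inr ⟨e, subset_removedBefore (lt_succ k) hek, hev⟩⟩

namespace IsRemovalSequence

lemma removedBefore_subset (hE : IsRemovalSequence D S E o) : removedBefore E o ⊆ D :=
  Set.iUnion₂_subset fun m hm => (hE m hm).removable.subset.trans Set.sdiff_subset

lemma partitionable (hE : IsRemovalSequence D S E o) : Partitionable (removedBefore E o) := by
  have hU : removedBefore E o = ⋃ m : Set.Iio o, E m := Set.biUnion_eq_iUnion (Set.Iio o) _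
  rw [hU]
  refine partitionable_iUnion (fun m => (hE m m.2).removable.partitionable) ?_
  refine (pairwise_disjoint_on _).2 fun k m hkm => ?_
  exact (Set.disjoint_sdiff_right.mono_left (subset_removedBefore hkm)).mono_right
    (hE m m.2).removable.subset

lemma mk_removedBefore_lt (hE : IsRemovalSequence D S E o) :
    #(removedBefore E o) < regularSucc o.card :=
  mk_iUnion_lt_of_isRegular (isRegular_regularSucc _) (lt_regularSucc _) fun m hm =>
    (hE m hm).mk_lt.trans_le (regularSucc_mono (Ordinal.card_le_card hm.le))

lemma demand_subset (hE : IsRemovalSequence D S E o) (hm : m < o) :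
    demand D S m (removedBefore E m) ∩ D ⊆ removedBefore E o :=
  (hE m hm).demand_subset.trans
    (Set.union_subset (removedBefore_mono hm.le) (subset_removedBefore hm))

lemma subset_of_isSuccLimit (hE : IsRemovalSequence D S E o) (ho : IsSuccLimit o)
    (hS : #S ≤ o.card) (hSD : S ⊆ D) : S ⊆ removedBefore E o := by
  intro e he
  obtain ⟨m, hm, hem⟩ := exists_mem_firstElems ho hS he
  exact hE.demand_subset hm ⟨Or.inl hem, hSD he⟩

/-- At a limit, each arc of a small minimum cut has been demanded at some earlier step. -/
lemma cutClosed (hE : IsRemovalSequence D S E o) (ho : IsSuccLimit o) (hD : IsBalanced D) :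
    CutClosed (regularSucc o.card) D (removedBefore E o) := by
  intro u hu v hv X huX hvX hX
  obtain ⟨huY, hvY, -⟩ := minCut_spec (D := D) huX hvX
  refine ⟨minCut D u v, huY, hvY, fun e he => ?_⟩
  have hcut : #(cutArcs D (minCut D u v)) ≤ o.card := by
    rw [← lt_regularSucc_iff (Ordinal.aleph0_le_card.2 (Ordinal.omega0_le_of_isSuccLimit ho))]
    exact hD.mk_cutArcs_minCut_lt (aleph0_le_regularSucc _) huX hvX hX
  obtain ⟨i, hi, hui⟩ := exists_mem_endVertices_removedBefore ho hu
  obtain ⟨j, hj, hvj⟩ := exists_mem_endVertices_removedBefore ho hv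
  obtain ⟨k, hk, hek⟩ := exists_mem_firstElems ho hcut he
  let m := max i (max j k)
  have him : i ≤ m := le_max_left _ _
  have hjm : j ≤ m := (le_max_left _ _).trans (le_max_right _ _)
  have hkm : k ≤ m := (le_max_right _ _).trans (le_max_right _ _)
  have hem : e ∈ demand D S m (removedBefore E m) := Or.inr <| Set.mem_iUnion₂.2
    ⟨u, endVertices_mono (removedBefore_mono him) hui, Set.mem_iUnion₂.2
      ⟨v, endVertices_mono (removedBefore_mono hjm) hvj, firstElems_mono _ hkm hek⟩⟩
  have heD : e ∈ D := he.elim (·.1) (·.1)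
  exact hE.demand_subset (max_lt hi (max_lt hj hk)) ⟨hem, heD⟩

lemma balanced_diff (hE : IsRemovalSequence D S E o) (hD : IsBalanced D) :
    IsBalanced (D \ removedBefore E o) := by
  rcases Ordinal.zero_or_succ_or_isSuccLimit o with rfl | ⟨m, rfl⟩ | ho
  · simpa [removedBefore] using hD
  · rw [removedBefore_succ, ← Set.sdiff_sdiff]
    exact (hE m (lt_succ m)).removable.balanced_diff
  · exact hD.diff_of_cutClosed (aleph0_le_regularSucc _) hE.removedBefore_subset
      hE.mk_removedBefore_lt (hE.cutClosed ho hD)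

lemma removable (hE : IsRemovalSequence D S E o) (hD : IsBalanced D) :
    Removable D (removedBefore E o) :=
  ⟨hE.removedBefore_subset, hE.partitionable, hE.balanced_diff hD⟩

end IsRemovalSequence

lemma exists_forall_eq_removedBefore (next : Ordinal.{u} → Set (V × V) → Set (V × V)) :
    ∃ E : Ordinal.{u} → Set (V × V), ∀ m, E m = next m (removedBefore E m) :=
  ⟨WellFounded.fix wellFounded_lt fun m E => next m (⋃ k, ⋃ h : k < m, E k h),
    WellFounded.fix_eq _ _⟩

lemma IsBalanced.exists_removalSequence (hD : IsBalanced D)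
    (hstep : ∀ m < o, ∀ B, IsBalanced (D \ B) → #B < regularSucc m.card →
      ∃ E, IsRemovalStep D S m B E) : ∃ E, IsRemovalSequence D S E o := by
  choose! next hnext using hstep
  obtain ⟨E, hE⟩ := exists_forall_eq_removedBefore next
  refine ⟨E, fun m => ?_⟩
  induction m using WellFoundedLT.induction with
  | ind m ih =>
    intro hm
    have hEm : IsRemovalSequence D S E m := fun k hk => ih k hk (hk.trans hm)
    rw [hE m]
    exact hnext m hm _ (hEm.balanced_diff hD) hEm.mk_removedBefore_lt

end RemovalSequence

section Main

variable {V : Type u} {D S : Set (V × V)}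

/-- In every balanced loop-free digraph on `V`, any fewer than `κ` arcs lie in a removable set of
fewer than `κ` arcs. -/
def HasSmallRemovableCovers (V : Type u) (κ : Cardinal.{u}) : Prop :=
  ∀ D : Set (V × V), IsBalanced D → (∀ e ∈ D, e.1 ≠ e.2) → ∀ S ⊆ D, #S < κ →
    ∃ C, S ⊆ C ∧ #C < κ ∧ Removable D C

lemma HasSmallRemovableCovers.exists_isRemovalStep {m : Ordinal.{u}} {B : Set (V × V)}
    (h : HasSmallRemovableCovers V (regularSucc m.card)) (hloop : ∀ e ∈ D, e.1 ≠ e.2)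
    (hDB : IsBalanced (D \ B)) (hB : #B < regularSucc m.card) :
    ∃ E, IsRemovalStep D S m B E := by
  have hdemand : #((demand D S m B ∩ D) \ B : Set (V × V)) < regularSucc m.card :=
    (mk_le_mk_of_subset (Set.sdiff_subset.trans Set.inter_subset_left)).trans_lt (mk_demand_lt hB)
  obtain ⟨E, hsub, hcard, hE⟩ := h (D \ B) hDB (fun e he => hloop e he.1) _
    (Set.sdiff_subset_sdiff_left Set.inter_subset_right) hdemand
  exact ⟨E, hE, Set.sdiff_subset_iff.1 hsub, hcard⟩

theorem hasSmallRemovableCovers (κ : Cardinal.{u}) (hκ : ℵ₀ ≤ κ) :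
    HasSmallRemovableCovers V κ := by
  induction κ using WellFoundedLT.induction with
  | ind κ ih =>
    intro D hD hloop S hSD hS
    rcases lt_or_ge #S ℵ₀ with hfin | hinf
    · obtain ⟨C, hSC, hC, hrem⟩ :=
        hD.exists_finite_removable hloop (lt_aleph0_iff_set_finite.1 hfin) hSD
      exact ⟨C, hSC, hC.lt_aleph0.trans_le hκ, hrem⟩
    have hsmall {m : Ordinal.{u}} (hm : m < (#S).ord) : regularSucc m.card ≤ #S :=
      max_le hinf (succ_le_of_lt (lt_ord.1 hm))
    obtain ⟨E, hE⟩ := hD.exists_removalSequence (S := S) (o := (#S).ord) fun m hm B =>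
      (ih _ ((hsmall hm).trans_lt hS) (aleph0_le_regularSucc _)).exists_isRemovalStep hloop
    have hcard := hE.mk_removedBefore_lt
    rw [card_ord, lt_regularSucc_iff hinf] at hcard
    exact ⟨removedBefore E (#S).ord,
      hE.subset_of_isSuccLimit (isSuccLimit_ord hinf) (card_ord _).ge hSD,
      hcard.trans_lt hS, hE.removable hD⟩

end Main

/-- **Thomassen's conjecture / Nash-Williams' theorem for digraphs.**
The arc set of a loop-free digraph can be partitioned into dicycles if and only if
the digraph is balanced. -/
theorem arcs_partition_into_dicycles_iff_balanced {V : Type*} (A : Set (V × V))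
    (hA : ∀ e ∈ A, e.1 ≠ e.2) :
    (∃ P : Set (Set (V × V)), IsDicyclePartition A P) ↔ IsBalanced A := by
  refine ⟨fun ⟨_, hP⟩ => hP.balanced, fun hbal => ?_⟩
  obtain ⟨C, hAC, -, hC⟩ := hasSmallRemovableCovers (regularSucc #A) (aleph0_le_regularSucc _)
    A hbal hA A subset_rfl (lt_regularSucc _)
  rw [hAC.antisymm hC.subset]
  exact hC.partitionable
end

section
/- Let D = (V, A) be a digraph whose arc set A is countable. If D is balanced, then A can be partitioned into dicycles. -/
open Cardinal Function Set

section Packing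

variable {α : Type*}

/-- A packing of `A` by sets satisfying `q`: like a partition of `A` into such sets, except that
the members of `P` need not cover `A`. -/
structure IsPacking (q : Set α → Prop) (A : Set α) (P : Set (Set α)) : Prop where
  prop_of_mem : ∀ C ∈ P, q C
  pairwiseDisjoint : P.PairwiseDisjoint id
  sUnion_subset : ⋃₀ P ⊆ A

namespace IsPacking

variable {q : Set α → Prop} {A C : Set α} {P : Set (Set α)}

lemma empty : IsPacking q A ∅ :=
  ⟨by simp, pairwiseDisjoint_empty, by simp⟩

lemma insert (hP : IsPacking q A P) (hC : q C) (hCA : C ⊆ A \ ⋃₀ P) :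
    IsPacking q A (insert C P) where
  prop_of_mem := forall_mem_insert.2 ⟨hC, hP.prop_of_mem⟩
  pairwiseDisjoint := hP.pairwiseDisjoint.insert fun _ hD _ ↦
    (disjoint_sdiff_left.mono_left hCA).mono_right (subset_sUnion_of_mem hD)
  sUnion_subset := by
    rw [sUnion_insert]
    exact union_subset (hCA.trans sdiff_subset) hP.sUnion_subset

lemma iUnion {ι : Type*} {P : ι → Set (Set α)} (hP : ∀ i, IsPacking q A (P i))
    (hdir : Directed (· ⊆ ·) P) : IsPacking q A (⋃ i, P i) where
  prop_of_mem C hC := by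
    obtain ⟨i, hi⟩ := mem_iUnion.1 hC
    exact (hP i).prop_of_mem C hi
  pairwiseDisjoint := (pairwiseDisjoint_iUnion hdir).2 fun i ↦ (hP i).pairwiseDisjoint
  sUnion_subset := by
    rw [sUnion_iUnion]
    exact iUnion_subset fun i ↦ (hP i).sUnion_subset

end IsPacking

theorem exists_isPacking_sUnion_eq_of_countable {p q : Set α → Prop} {A : Set α}
    (hA : A.Countable) (hpA : p A)
    (hstep : ∀ B ⊆ A, p B → ∀ a ∈ B, ∃ C ⊆ B, a ∈ C ∧ q C ∧ p (B \ C)) :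
    ∃ P, IsPacking q A P ∧ ⋃₀ P = A := by
  have := hA.toEncodable
  let Packing := {P : Set (Set α) // IsPacking q A P ∧ p (A \ ⋃₀ P)}
  have hcofinal (a : A) : IsCofinal {P : Packing | (a : α) ∈ ⋃₀ P.1} := by
    rintro ⟨P, hP, hpP⟩
    by_cases haP : (a : α) ∈ ⋃₀ P
    · exact ⟨⟨P, hP, hpP⟩, haP, le_rfl⟩
    obtain ⟨C, hCB, haC, hqC, hpC⟩ := hstep _ sdiff_subset hpP a ⟨a.2, haP⟩
    refine ⟨⟨insert C P, hP.insert hqC hCB, ?_⟩, ⟨C, mem_insert C P, haC⟩, subset_insert C P⟩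
    rwa [sUnion_insert, union_comm, ← sdiff_sdiff]
  let start : Packing := ⟨∅, .empty, by simpa using hpA⟩
  let covering (a : A) : Order.Cofinal Packing := ⟨_, hcofinal a⟩
  let F : ℕ → Packing := Order.sequenceOfCofinals start covering
  have hF : Monotone F := Order.sequenceOfCofinals.monotone start covering
  have hpacking : IsPacking q A (⋃ n, (F n).1) :=
    .iUnion (fun n ↦ (F n).2.1) (Monotone.directed_le fun _ _ hmn ↦ hF hmn)
  refine ⟨_, hpacking, hpacking.sUnion_subset.antisymm fun a ha ↦ ?_⟩
  obtain ⟨C, hC, haC⟩ := Order.sequenceOfCofinals.encode_mem start covering ⟨a, ha⟩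
  exact ⟨C, mem_iUnion_of_mem _ hC, haC⟩

end Packing

theorem exists_relSeries_injective_of_reflTransGen {V : Type*} {A : SetRel V V} {u v : V}
    (h : Relation.ReflTransGen (fun x y ↦ (x, y) ∈ A) u v) :
    ∃ p : RelSeries A, p.head = u ∧ p.last = v ∧ Injective p := by
  induction h using Relation.ReflTransGen.head_induction_on with
  | refl => exact ⟨.singleton A v, rfl, rfl, injective_of_subsingleton (α := Fin 1) _⟩
  | @head u w huw _ ih =>
    obtain ⟨p, rfl, rfl, hp⟩ := ih
    by_cases hu : u ∈ p
    · obtain ⟨i, rfl⟩ := hu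
      refine ⟨p.drop i, p.head_drop i, p.last_drop i, fun j k hjk ↦ ?_⟩
      simpa [Fin.ext_iff] using hp hjk
    · refine ⟨p.cons u huw, rfl, p.last_cons u huw, List.nodup_ofFn.1 ?_⟩
      change (p.cons u huw).toList.Nodup
      rw [RelSeries.toList_cons]
      exact (List.nodup_ofFn.2 hp).cons (mt (List.mem_ofFn' _ _).1 hu)

section Digraph

variable {V : Type*} {A B C : Set (V × V)} {X : Set V}

lemma inArcs_mono (h : A ⊆ B) : inArcs A X ⊆ inArcs B X :=
  fun _ he ↦ ⟨h he.1, he.2⟩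

lemma outArcs_mono (h : A ⊆ B) : outArcs A X ⊆ outArcs B X :=
  fun _ he ↦ ⟨h he.1, he.2⟩

lemma inArcs_sdiff : inArcs (A \ C) X = inArcs A X \ inArcs C X := by
  grind [inArcs]

lemma outArcs_sdiff : outArcs (A \ C) X = outArcs A X \ outArcs C X := by
  grind [outArcs]

lemma inArcs_eq_sdiff : inArcs A X = (A ∩ Prod.snd ⁻¹' X) \ (A ∩ Prod.fst ⁻¹' X) := by
  grind [inArcs]

lemma outArcs_eq_sdiff : outArcs A X = (A ∩ Prod.fst ⁻¹' X) \ (A ∩ Prod.snd ⁻¹' X) := by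
  grind [outArcs]

lemma isBalanced_of_finite (hA : A.Finite)
    (h : ∀ X : Set V, (A ∩ Prod.snd ⁻¹' X).ncard = (A ∩ Prod.fst ⁻¹' X).ncard) :
    IsBalanced A := by
  intro X
  have hheads := hA.inter_of_left (Prod.snd ⁻¹' X)
  have htails := hA.inter_of_left (Prod.fst ⁻¹' X)
  rw [inArcs_eq_sdiff, outArcs_eq_sdiff, ← cast_ncard hheads.sdiff, ← cast_ncard htails.sdiff,
    (ncard_eq_ncard_iff_ncard_sdiff_eq_ncard_sdiff hheads htails).1 (h X)]

lemma isBalanced_range_perm {ι : Type*} [Finite ι] (σ : Equiv.Perm ι) {f : ι → V}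
    (hf : Injective f) : IsBalanced (range fun i ↦ (f i, f (σ i))) := by
  refine isBalanced_of_finite (finite_range _) fun X ↦ ?_
  have hinj : Injective fun i ↦ (f i, f (σ i)) := fun i j hij ↦ hf (congrArg Prod.fst hij)
  calc (range (fun i ↦ (f i, f (σ i))) ∩ Prod.snd ⁻¹' X).ncard
      = (σ ⁻¹' (f ⁻¹' X)).ncard := by
        rw [← image_preimage_eq_range_inter, ncard_image_of_injective _ hinj]; rfl
    _ = (f ⁻¹' X).ncard := by
        rw [← σ.image_symm_eq_preimage, ncard_image_of_injective _ σ.symm.injective]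
    _ = (range (fun i ↦ (f i, f (σ i))) ∩ Prod.fst ⁻¹' X).ncard := by
        rw [← image_preimage_eq_range_inter, ncard_image_of_injective _ hinj]; rfl

namespace IsBalanced

lemma sdiff (hA : IsBalanced A) (hC : IsBalanced C) (hCA : C ⊆ A) (hfin : C.Finite) :
    IsBalanced (A \ C) := by
  intro X
  have hlt : #(outArcs C X) < ℵ₀ := (hfin.subset (sep_subset _ _)).lt_aleph0
  refine Cardinal.eq_of_add_eq_add_right ?_ hlt
  calc #(inArcs (A \ C) X) + #(outArcs C X)
      = #(inArcs A X) := by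
        rw [inArcs_sdiff, ← hC X, mk_sdiff_add_mk (inArcs_mono hCA)]
    _ = #(outArcs A X) := hA X
    _ = #(outArcs (A \ C) X) + #(outArcs C X) := by
        rw [outArcs_sdiff, mk_sdiff_add_mk (outArcs_mono hCA)]

lemma reflTransGen_of_mem_s3 (hA : IsBalanced A) {u v : V} (huv : (u, v) ∈ A) :
    Relation.ReflTransGen (fun x y ↦ (x, y) ∈ A) v u := by
  by_contra hu
  let X : Set V := {x | Relation.ReflTransGen (fun x y ↦ (x, y) ∈ A) v x}
  have hout : outArcs A X = ∅ :=
    eq_empty_of_forall_notMem fun e he ↦ he.2.2 (he.2.1.tail he.1)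
  have hin : inArcs A X = ∅ := by
    rw [← mk_set_eq_zero_iff, hA X, hout, mk_set_eq_zero_iff]
  exact (hin ▸ ⟨huv, hu, .refl⟩ : (u, v) ∈ (∅ : Set (V × V)))

end IsBalanced

namespace IsDicycle

lemma subset_s3 (hC : IsDicycle A C) : C ⊆ A := by
  obtain ⟨-, -, -, -, -, hCA⟩ := hC
  exact hCA

lemma mono (hC : IsDicycle A C) (hAB : A ⊆ B) : IsDicycle B C := by
  obtain ⟨n, f, hn, hf, hCf, hCA⟩ := hC
  exact ⟨n, f, hn, hf, hCf, hCA.trans hAB⟩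

lemma exists_eq_range (hC : IsDicycle A C) :
    ∃ (n : ℕ) (_ : NeZero n) (f : ZMod n → V), Injective f ∧
      C = range fun i ↦ (f i, f (i + 1)) := by
  obtain ⟨n, f, hn, hf, rfl, -⟩ := hC
  refine ⟨n, ⟨by lia⟩, f, hf, ?_⟩
  simp only [range, eq_comm]

lemma finite_s3 (hC : IsDicycle A C) : C.Finite := by
  obtain ⟨n, _, f, -, rfl⟩ := hC.exists_eq_range
  exact finite_range _

lemma isBalanced (hC : IsDicycle A C) : IsBalanced C := by
  obtain ⟨n, _, f, hf, rfl⟩ := hC.exists_eq_range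
  exact isBalanced_range_perm (Equiv.addRight 1) hf

end IsDicycle

lemma isDicycle_range_fin {m : ℕ} (hm : m ≠ 0) {f : Fin (m + 1) → V} (hf : Injective f)
    (hA : ∀ i, (f i, f (i + 1)) ∈ A) : IsDicycle A (range fun i ↦ (f i, f (i + 1))) := by
  refine ⟨m + 1, f, by lia, hf, ?_, range_subset_iff.2 hA⟩
  simp only [range, eq_comm]
  -- `ZMod (m + 1)` unfolds to `Fin (m + 1)`.
  rfl

lemma exists_isDicycle_mem_of_relSeries (p : RelSeries A) (hp : Injective p)
    (hclose : (p.last, p.head) ∈ A) (hne : p.last ≠ p.head) :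
    ∃ C, IsDicycle A C ∧ (p.last, p.head) ∈ C := by
  have hlength : p.length ≠ 0 := fun h ↦ hne (congrArg p (Fin.ext h))
  have hlast : (p (Fin.last _), p (Fin.last _ + 1)) = (p.last, p.head) := by
    rw [Fin.last_add_one, p.apply_last, p.apply_zero]
  refine ⟨_, isDicycle_range_fin hlength hp fun i ↦ ?_, Fin.last _, hlast⟩
  induction i using Fin.lastCases with
  | last => rwa [hlast]
  | cast i => simpa only [Fin.coeSucc_eq_succ] using p.step i

lemma IsBalanced.exists_isDicycle_mem (hA : IsBalanced A) {e : V × V} (he : e ∈ A)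
    (hloop : e.1 ≠ e.2) : ∃ C, IsDicycle A C ∧ e ∈ C := by
  obtain ⟨p, hhead, hlast, hp⟩ :=
    exists_relSeries_injective_of_reflTransGen (hA.reflTransGen_of_mem_s3 he)
  obtain ⟨u, v⟩ := e
  obtain rfl : p.head = v := hhead
  obtain rfl : p.last = u := hlast
  exact exists_isDicycle_mem_of_relSeries p hp he hloop

end Digraph

/-- If the arc set of a loop-free balanced digraph is countable, then
it can be partitioned into dicycles. -/
theorem countable_balanced_digraph_partition {V : Type*} (A : Set (V × V))
    (hA : ∀ e ∈ A, e.1 ≠ e.2) (hcount : A.Countable) (hbal : IsBalanced A) :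
    ∃ P : Set (Set (V × V)), IsDicyclePartition A P := by
  obtain ⟨P, hP, hPA⟩ :=
    exists_isPacking_sUnion_eq_of_countable (q := IsDicycle A) hcount hbal fun B hBA hB e he ↦ by
      obtain ⟨C, hC, heC⟩ := hB.exists_isDicycle_mem he (hA e (hBA he))
      exact ⟨C, hC.subset_s3, heC, hC.mono hBA, hB.sdiff hC.isBalanced hC.subset_s3 hC.finite_s3⟩
  exact ⟨P, hP.prop_of_mem, hP.pairwiseDisjoint, hPA⟩
end

section
/- Let G be a simple undirected graph on a vertex type V. Then the edge set of G can be partitioned into (edge sets of) cycles if and only if for every subset X ⊆ V the set of edges of G with exactly one endpoint in X is either infinite or has an even (finite) number of elements. -/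
/-- `C` is the edge set of a cycle of the simple graph `G`. -/
def IsCycleEdgeSet {V : Type*} (G : SimpleGraph V) (C : Set (Sym2 V)) : Prop :=
  ∃ (v : V) (w : G.Walk v v), w.IsCycle ∧ C = {e | e ∈ w.edges}

/-- The cut determined by a vertex set `X`: the edges of `G` with exactly one
endpoint in `X`. -/
def cutEdges {V : Type*} (G : SimpleGraph V) (X : Set V) : Set (Sym2 V) :=
  {e ∈ G.edgeSet | ∃ u v, e = s(u, v) ∧ u ∈ X ∧ v ∉ X}

/-!
Call a graph *even* if all its finite cuts are even. A cycle meets every cut in an even number of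
edges, so every graph that decomposes into cycles is even.

Conversely, an even graph has no bridge, so each of its edges lies on a cycle, and removing a cycle
leaves an even graph. A countable even graph is therefore decomposed by removing cycles one by one
along an enumeration of its edges.

An uncountable even graph `G` is treated by induction on its number of edges. It is exhausted by a
transfinite increasing sequence of subgraphs `M α` with at most `max ℵ₀ |α|` edges, and so
partitioned into the smaller graphs `M α \ N α`, where `N α = ⨆ β < α, M β`. Two facts make these
even.

* `EvenCuts.sdiff`: `G \ N` is even if any two vertices of `N` that are connected in `G \ N` cannot
  be separated there by finitely many edges. To ensure this for `N = N α`, fix for any two vertices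
  `x`, `y` a separating set of edges of minimum cardinality, enumerated along its initial ordinal,
  and let `M α` contain, for any two of its vertices, the members of their separator with index at
  most `ω + α`. If finitely many edges separate `x` and `y` in `G \ N α`, these edges together with
  those of `N α` separate them in `G`, so the chosen separator has size at most `max ℵ₀ |α|` and
  all its edges lie in `N α`; hence `x` and `y` are not connected in `G \ N α` at all.

* `EvenCuts.of_reflectsReachability`: a subgraph of an even graph is even if it reflects
  reachability between its vertices after deletion of finitely many of its edges. Closing off under
  a choice of walks ensures this for `M α \ N α` inside `G \ N α`.
-/

open Cardinal Set SimpleGraph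
open scoped Ordinal

universe u v

variable {V : Type u} {G : SimpleGraph V}

/-- The condition on cuts in Nash-Williams' theorem: every finite cut of `G` is even. -/
def EvenCuts (G : SimpleGraph V) : Prop :=
  ∀ X : Set V, (cutEdges G X).Finite → Even (cutEdges G X).ncard

/-- The edges of `G` can be partitioned into cycles. -/
def CycleDecomposable (G : SimpleGraph V) : Prop :=
  ∃ P : Set (Set (Sym2 V)), (∀ C ∈ P, IsCycleEdgeSet G C) ∧
    P.PairwiseDisjoint id ∧ ⋃₀ P = G.edgeSet

lemma edgeSet_inf_fromEdgeSet (s : Set (Sym2 V)) :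
    (G ⊓ fromEdgeSet s).edgeSet = G.edgeSet ∩ s := by
  ext e
  induction e with | h a b
  simp only [mem_edgeSet, inf_adj, fromEdgeSet_adj, mem_inter_iff]
  exact ⟨fun h ↦ ⟨h.1, h.2.1⟩, fun h ↦ ⟨h.1, h.2, h.1.ne⟩⟩

lemma mk_mem_cutEdges {X : Set V} {a b : V} :
    s(a, b) ∈ cutEdges G X ↔ G.Adj a b ∧ ¬(a ∈ X ↔ b ∈ X) := by
  simp only [cutEdges, mem_ofPred_eq, mem_edgeSet, and_congr_right_iff]
  refine fun _ ↦ ⟨?_, fun h ↦ ?_⟩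
  · rintro ⟨u, v, huv, hu, hv⟩
    rcases Sym2.eq_iff.1 huv with ⟨rfl, rfl⟩ | ⟨rfl, rfl⟩ <;> tauto
  · by_cases ha : a ∈ X
    · exact ⟨a, b, rfl, ha, by tauto⟩
    · exact ⟨b, a, Sym2.eq_swap, by tauto, ha⟩

lemma cutEdges_subset_edgeSet (G : SimpleGraph V) (X : Set V) : cutEdges G X ⊆ G.edgeSet :=
  fun _ he ↦ he.1

lemma cutEdges_sdiff (G H : SimpleGraph V) (X : Set V) :
    cutEdges (G \ H) X = cutEdges G X \ H.edgeSet := by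
  ext e
  simp only [cutEdges, edgeSet_sdiff, mem_ofPred_eq, mem_sdiff]
  tauto

lemma cutEdges_subset_of_forall_reachable {F : Set (Sym2 V)} {X : Set V}
    (hX : ∀ a b, (G.deleteEdges F).Reachable a b → a ∈ X → b ∈ X) : cutEdges G X ⊆ F := by
  intro e
  induction e with | h a b
  rw [mk_mem_cutEdges]
  rintro ⟨hab, hne⟩
  by_contra hF
  have hreach : (G.deleteEdges F).Reachable a b := Adj.reachable (deleteEdges_adj.2 ⟨hab, hF⟩)
  exact hne ⟨hX a b hreach, hX b a hreach.symm⟩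

lemma mem_iff_mem_of_reachable_deleteEdges_cutEdges {X : Set V} {x y : V}
    (h : (G.deleteEdges (cutEdges G X)).Reachable x y) : x ∈ X ↔ y ∈ X := by
  rw [reachable_iff_reflTransGen] at h
  induction h with
  | refl => rfl
  | tail _ hab ih =>
    rw [deleteEdges_adj, mk_mem_cutEdges] at hab
    tauto

/-! ### Cycles and cuts -/

open Classical in
lemma even_countP_edges_cutEdges_iff (X : Set V) {a b : V} (w : G.Walk a b) :
    Even (w.edges.countP (· ∈ cutEdges G X)) ↔ (a ∈ X ↔ b ∈ X) := by
  induction w with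
  | nil => simp
  | @cons a b c hab w ih =>
    have hcut : s(a, b) ∈ cutEdges G X ↔ ¬(a ∈ X ↔ b ∈ X) := by simp [mk_mem_cutEdges, hab]
    rw [Walk.edges_cons, List.countP_cons]
    by_cases h : a ∈ X ↔ b ∈ X
    · simp [hcut, h, ih]
    · simp only [hcut, h, not_false_eq_true, decide_true, if_true, Nat.even_add_one, ih]
      tauto

namespace IsCycleEdgeSet

variable {C : Set (Sym2 V)}

lemma subset_edgeSet (hC : IsCycleEdgeSet G C) : C ⊆ G.edgeSet := by
  obtain ⟨v, w, -, rfl⟩ := hC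
  exact w.edges_subset_edgeSet

lemma finite (hC : IsCycleEdgeSet G C) : C.Finite := by
  obtain ⟨v, w, -, rfl⟩ := hC
  exact w.edges.finite_toSet

lemma of_subset {H : SimpleGraph V} (hC : IsCycleEdgeSet G C) (hCH : C ⊆ H.edgeSet) :
    IsCycleEdgeSet H C := by
  obtain ⟨v, w, hw, rfl⟩ := hC
  have hwH : ∀ e ∈ w.edges, e ∈ H.edgeSet := hCH
  exact ⟨v, w.transfer H hwH, hw.transfer hwH, by rw [w.edges_transfer]⟩

lemma even_ncard_inter_cutEdges (hC : IsCycleEdgeSet G C) (X : Set V) :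
    Even (C ∩ cutEdges G X).ncard := by
  classical
  obtain ⟨v, w, hw, rfl⟩ := hC
  have hcount : Even (w.edges.countP (· ∈ cutEdges G X)) :=
    (even_countP_edges_cutEdges_iff X w).2 Iff.rfl
  rw [List.countP_eq_length_filter,
    ← List.toFinset_card_of_nodup (hw.isCircuit.isTrail.edges_nodup.filter _),
    ← ncard_coe_finset] at hcount
  convert hcount using 2
  ext e
  simp

end IsCycleEdgeSet

lemma even_ncard_of_subset_iUnion {α : Type*} {ι : Type*} {A : ι → Set α} {K : Set α}
    (hA : Pairwise (Function.onFun Disjoint A)) (hK : K.Finite) (hKA : K ⊆ ⋃ i, A i)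
    (heven : ∀ i, Even (A i ∩ K).ncard) : Even K.ncard := by
  obtain ⟨I, hI, hKI⟩ := finite_subset_iUnion hK hKA
  have hK_eq : K = ⋃ i ∈ I, A i ∩ K := by
    rw [← iUnion₂_inter, inter_eq_right.2 hKI]
  rw [hK_eq, hI.ncard_biUnion (fun i _ ↦ hK.inter_of_right _)
    fun i _ j _ hij ↦ (hA hij).mono inter_subset_left inter_subset_left]
  exact finsum_mem_induction Even Even.zero (fun _ _ ↦ Even.add) fun i _ ↦ heven i

theorem CycleDecomposable.evenCuts (h : CycleDecomposable G) : EvenCuts G := by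
  obtain ⟨P, hcycle, hdisj, hP⟩ := h
  intro X hX
  refine even_ncard_of_subset_iUnion (A := ((↑) : P → Set (Sym2 V)))
    (fun C D hCD ↦ hdisj C.2 D.2 (Subtype.coe_ne_coe.2 hCD)) hX ?_
    fun C ↦ (hcycle C C.2).even_ncard_inter_cutEdges X
  rw [← sUnion_eq_iUnion, hP]
  exact cutEdges_subset_edgeSet G X

/-! ### Combining decompositions -/

lemma cycleDecomposable_bot : CycleDecomposable (⊥ : SimpleGraph V) :=
  ⟨∅, by simp⟩

lemma IsCycleEdgeSet.cycleDecomposable (hG : IsCycleEdgeSet G G.edgeSet) : CycleDecomposable G :=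
  ⟨{G.edgeSet}, by simpa, by simp, by simp⟩

lemma CycleDecomposable.iSup {ι : Type*} {H : ι → SimpleGraph V}
    (hdisj : Pairwise (Function.onFun Disjoint H)) (hH : ∀ i, CycleDecomposable (H i)) :
    CycleDecomposable (⨆ i, H i) := by
  choose P hcycle hPdisj hP using hH
  have hsub : ∀ {i C}, C ∈ P i → C ⊆ (H i).edgeSet := fun hC ↦ (hcycle _ _ hC).subset_edgeSet
  refine ⟨⋃ i, P i, ?_, ?_, ?_⟩
  · rintro C hC
    obtain ⟨i, hC⟩ := mem_iUnion.1 hC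
    exact (hcycle i C hC).of_subset ((hsub hC).trans (edgeSet_mono (le_iSup H i)))
  · intro C hC D hD hCD
    obtain ⟨i, hC⟩ := mem_iUnion.1 hC
    obtain ⟨j, hD⟩ := mem_iUnion.1 hD
    obtain rfl | hij := eq_or_ne i j
    · exact hPdisj i hC hD hCD
    · exact (disjoint_edgeSet.2 (hdisj hij)).mono (hsub hC) (hsub hD)
  · simp only [sUnion_iUnion, hP, edgeSet_iSup]

section SdiffISupLT

variable {ι β : Type*} [LinearOrder ι] [CompleteBooleanAlgebra β] (M : ι → β)

lemma pairwise_disjoint_sdiff_iSup_lt :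
    Pairwise (Function.onFun Disjoint fun i ↦ M i \ ⨆ j < i, M j) :=
  (pairwise_disjoint_on _).2 fun i _ hij ↦
    disjoint_sdiff_self_right.mono_left <|
      sdiff_le.trans (le_iSup₂ (f := fun j _ ↦ M j) i hij)

lemma iSup_sdiff_iSup_lt [WellFoundedLT ι] : ⨆ i, (M i \ ⨆ j < i, M j) = ⨆ i, M i := by
  refine le_antisymm (iSup_mono fun i ↦ sdiff_le) (iSup_le fun i ↦ ?_)
  induction i using WellFoundedLT.induction with
  | ind i ih =>
    exact le_sdiff_sup.trans (sup_le (le_iSup (fun i ↦ M i \ ⨆ j < i, M j) i) (iSup₂_le ih))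

end SdiffISupLT

lemma CycleDecomposable.of_sdiff_iSup_lt {ι : Type*} [LinearOrder ι] [WellFoundedLT ι]
    {M : ι → SimpleGraph V} (hM : ∀ i, CycleDecomposable (M i \ ⨆ j < i, M j)) :
    CycleDecomposable (⨆ i, M i) :=
  iSup_sdiff_iSup_lt M ▸ CycleDecomposable.iSup (pairwise_disjoint_sdiff_iSup_lt M) hM

lemma exists_forall_iSup_lt {ι β : Type*} [Preorder ι] [WellFoundedLT ι] [CompleteLattice β]
    {q : ι → β → β → Prop}
    (h : ∀ (i : ι) (M : ι → β), (∀ j < i, q j (⨆ k < j, M k) (M j)) → ∃ b, q i (⨆ j < i, M j) b) :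
    ∃ M : ι → β, ∀ i, q i (⨆ j < i, M j) (M i) := by
  obtain ⟨M, hM⟩ : ∃ M : ι → β, ∀ i, M i = Classical.epsilon (q i (⨆ j < i, M j)) :=
    ⟨wellFounded_lt.fix fun i M ↦ Classical.epsilon (q i (⨆ (j) (hj : j < i), M j hj)),
      fun i ↦ wellFounded_lt.fix_eq _ i⟩
  refine ⟨M, fun i ↦ ?_⟩
  induction i using WellFoundedLT.induction with
  | ind i ih => exact hM i ▸ Classical.epsilon_spec (h i M ih)

/-! ### Countable graphs -/

lemma cutEdges_setOf_reachable_of_isBridge {x y : V} (hxy : G.Adj x y)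
    (hbridge : G.IsBridge s(x, y)) :
    cutEdges G {v | (G.deleteEdges {s(x, y)}).Reachable x v} = {s(x, y)} := by
  refine Subset.antisymm (cutEdges_subset_of_forall_reachable fun a b hab hxa ↦ hxa.trans hab)
    (singleton_subset_iff.2 (mk_mem_cutEdges.2 ⟨hxy, fun h ↦ ?_⟩))
  exact (isBridge_iff.1 hbridge) (h.1 .rfl)

namespace EvenCuts

lemma not_isBridge (hG : EvenCuts G) {e : Sym2 V} (he : e ∈ G.edgeSet) : ¬G.IsBridge e := by
  induction e with | h x y
  intro hbridge
  have hcut := cutEdges_setOf_reachable_of_isBridge he hbridge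
  simpa [hcut] using hG {v | (G.deleteEdges {s(x, y)}).Reachable x v}

lemma sdiff_of_isCycleEdgeSet (hG : EvenCuts G) {H : SimpleGraph V}
    (hH : IsCycleEdgeSet G H.edgeSet) : EvenCuts (G \ H) := by
  intro X hX
  rw [cutEdges_sdiff] at hX ⊢
  have hcut : (cutEdges G X).Finite :=
    (hX.union hH.finite).subset (by rw [sdiff_union_self]; exact subset_union_left)
  have hsum := hG X hcut
  rw [← ncard_inter_add_ncard_sdiff_eq_ncard (cutEdges G X) H.edgeSet hcut, inter_comm] at hsum
  exact (Nat.even_add.1 hsum).1 (hH.even_ncard_inter_cutEdges X)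

lemma exists_le_cycleDecomposable (hG : EvenCuts G) {e : Sym2 V} (he : e ∈ G.edgeSet) :
    ∃ H ≤ G, e ∈ H.edgeSet ∧ CycleDecomposable H ∧ EvenCuts (G \ H) := by
  obtain ⟨v, w, hw, hew⟩ : ∃ (v : V) (w : G.Walk v v), w.IsCycle ∧ e ∈ w.edges := by
    simpa [isBridge_iff_forall_cycle_notMem he] using hG.not_isBridge he
  set H := G ⊓ fromEdgeSet {e | e ∈ w.edges}
  have hHedge : H.edgeSet = {e | e ∈ w.edges} := by
    rw [edgeSet_inf_fromEdgeSet, inter_eq_right]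
    exact w.edges_subset_edgeSet
  have hH : IsCycleEdgeSet G H.edgeSet := ⟨v, w, hw, hHedge⟩
  exact ⟨H, inf_le_left, hHedge ▸ hew,
    (hH.of_subset subset_rfl).cycleDecomposable, hG.sdiff_of_isCycleEdgeSet hH⟩

-- The edges are treated one after the other, each time removing a cycle through the current edge
-- if it is still present.
theorem cycleDecomposable_of_countable (hG : EvenCuts G) (hcount : G.edgeSet.Countable) :
    CycleDecomposable G := by
  obtain hempty | hne := G.edgeSet.eq_empty_or_nonempty
  · rw [edgeSet_eq_empty.1 hempty]
    exact cycleDecomposable_bot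
  obtain ⟨e, he⟩ := hcount.exists_eq_range hne
  obtain ⟨M, hM⟩ : ∃ M : ℕ → SimpleGraph V, ∀ n, M n ≤ G ∧
      e n ∈ ((⨆ m < n, M m) ⊔ M n).edgeSet ∧ CycleDecomposable (M n \ ⨆ m < n, M m) ∧
      EvenCuts (G \ ((⨆ m < n, M m) ⊔ M n)) := by
    refine exists_forall_iSup_lt (q := fun n N H ↦ H ≤ G ∧ e n ∈ (N ⊔ H).edgeSet ∧
      CycleDecomposable (H \ N) ∧ EvenCuts (G \ (N ⊔ H))) fun n M ih ↦ ?_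
    set N := ⨆ m < n, M m
    have hN : EvenCuts (G \ N) := by
      obtain _ | n := n
      · simpa [N] using hG
      · simpa [N, biSup_le_eq_sup] using (ih n n.lt_succ_self).2.2.2
    by_cases hen : e n ∈ N.edgeSet
    · exact ⟨⊥, bot_le, by simpa using hen, by simpa using cycleDecomposable_bot, by simpa using hN⟩
    · obtain ⟨H, hH, heH, hdec, heven⟩ := hN.exists_le_cycleDecomposable (e := e n)
        (by rw [edgeSet_sdiff, he]; exact ⟨mem_range_self n, hen⟩)
      refine ⟨H, hH.trans sdiff_le, by simp [heH], ?_, by rwa [← sdiff_sdiff_left]⟩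
      rwa [(disjoint_sdiff_self_left.mono_left hH).sdiff_eq_left]
  have hsup : ⨆ n, M n = G := by
    refine le_antisymm (iSup_le fun n ↦ (hM n).1) (edgeSet_subset_edgeSet.1 ?_)
    rw [he]
    rintro _ ⟨n, rfl⟩
    exact edgeSet_mono (sup_le (iSup₂_le fun m _ ↦ le_iSup M m) (le_iSup M n)) (hM n).2.1
  exact hsup ▸ CycleDecomposable.of_sdiff_iSup_lt fun n ↦ (hM n).2.2.1

end EvenCuts

/-! ### Inheritance of even cuts -/

/-- `H` reflects reachability in `G`: two vertices of `H` that cannot be separated in `G` by some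
finite set of edges of `H` cannot be separated in `H` by it either. -/
def ReflectsReachability (H G : SimpleGraph V) : Prop :=
  ∀ F ⊆ H.edgeSet, F.Finite → ∀ x ∈ H.support, ∀ y ∈ H.support,
    (G.deleteEdges F).Reachable x y → (H.deleteEdges F).Reachable x y

namespace EvenCuts

theorem of_reflectsReachability {H : SimpleGraph V} (hG : EvenCuts G) (hHG : H ≤ G)
    (h : ReflectsReachability H G) : EvenCuts H := by
  intro X hX
  set F := cutEdges H X
  set Y : Set V := {v | ∃ x ∈ H.support, x ∈ X ∧ (G.deleteEdges F).Reachable x v} with hY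
  have hYX : ∀ v ∈ H.support, v ∈ Y ↔ v ∈ X := fun v hv ↦
    ⟨fun ⟨x, hx, hxX, hxv⟩ ↦ (mem_iff_mem_of_reachable_deleteEdges_cutEdges
      (h F (cutEdges_subset_edgeSet H X) hX x hx v hv hxv)).1 hxX, fun hvX ↦ ⟨v, hv, hvX, .rfl⟩⟩
  have hcut : cutEdges G Y = F := by
    refine Subset.antisymm (cutEdges_subset_of_forall_reachable
      fun a b hab ⟨x, hx, hxX, hxa⟩ ↦ ⟨x, hx, hxX, hxa.trans hab⟩) fun e ↦ ?_
    induction e with | h a b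
    rw [mk_mem_cutEdges, mk_mem_cutEdges]
    rintro ⟨hab, hne⟩
    rw [hYX a hab.left_mem_support, hYX b hab.right_mem_support]
    exact ⟨hHG hab, hne⟩
  rw [← hcut] at hX ⊢
  exact hG Y hX

protected theorem sdiff {N : SimpleGraph V} (hG : EvenCuts G)
    (h : ∀ F : Set (Sym2 V), F.Finite → ∀ x ∈ N.support, ∀ y ∈ N.support,
      (G \ N).Reachable x y → ((G \ N).deleteEdges F).Reachable x y) : EvenCuts (G \ N) := by
  intro X hX
  set Y : Set V := {v | ∃ x ∈ N.support, x ∈ X ∧ (G \ N).Reachable x v}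
  have hYX : ∀ v ∈ N.support, v ∈ Y ↔ v ∈ X := fun v hv ↦
    ⟨fun ⟨x, hx, hxX, hxv⟩ ↦ (mem_iff_mem_of_reachable_deleteEdges_cutEdges
      (h _ hX x hx v hv hxv)).1 hxX, fun hvX ↦ ⟨v, hv, hvX, .rfl⟩⟩
  have hYY : ∀ {a b}, (G \ N).Adj a b → (a ∈ Y ↔ b ∈ Y) := fun hab ↦
    ⟨fun ⟨x, hx, hxX, hxa⟩ ↦ ⟨x, hx, hxX, hxa.trans hab.reachable⟩,
      fun ⟨x, hx, hxX, hxb⟩ ↦ ⟨x, hx, hxX, hxb.trans hab.symm.reachable⟩⟩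
  -- Switching sides in each component of `G \ N` with a vertex of `N` in `X` does not affect the
  -- cut of `G \ N`, but removes the edges of `N` from the cut of `G`.
  have hcut : cutEdges G {v | ¬(v ∈ X ↔ v ∈ Y)} = cutEdges (G \ N) X := by
    ext e
    induction e with | h a b
    simp only [mk_mem_cutEdges, mem_ofPred_eq, sdiff_adj]
    by_cases hN : N.Adj a b
    · simp [hN, hYX a hN.left_mem_support, hYX b hN.right_mem_support]
    · refine ⟨fun ⟨hab, hne⟩ ↦ ?_, fun ⟨⟨hab, _⟩, hne⟩ ↦ ?_⟩ <;>
      · have := hYY ⟨hab, hN⟩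
        tauto
  rw [← hcut] at hX ⊢
  exact hG _ hX

end EvenCuts

/-! ### Closure under set-valued operations -/

lemma mk_iUnion_le_of_forall_le {ι : Type v} {α : Type u} {κ : Cardinal.{u}} (hκ : ℵ₀ ≤ κ)
    (hι : lift.{u} #ι ≤ lift.{v} κ) {A : ι → Set α} (hA : ∀ i, #(A i) ≤ κ) :
    #(⋃ i, A i) ≤ κ := by
  rw [← lift_le.{v}]
  calc lift.{v} #(⋃ i, A i) ≤ sum fun i ↦ #(A i) := mk_iUnion_le_sum_mk_lift
    _ ≤ sum fun _ : ι ↦ κ := sum_le_sum _ _ hA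
    _ = lift.{u} #ι * lift.{v} κ := sum_const ι κ
    _ ≤ lift.{v} κ * lift.{v} κ := by gcongr
    _ = lift.{v} κ := mul_eq_self (aleph0_le_lift.2 hκ)

lemma mk_union_le_of_le {α : Type u} {κ : Cardinal.{u}} (hκ : ℵ₀ ≤ κ) {A B : Set α} (hA : #A ≤ κ)
    (hB : #B ≤ κ) : #(A ∪ B : Set α) ≤ κ :=
  (mk_union_le A B).trans (add_le_of_le hκ hA hB)

lemma mk_le_of_finite {α : Type u} {κ : Cardinal.{u}} (hκ : ℵ₀ ≤ κ) {A : Set α} (hA : A.Finite) :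
    #A ≤ κ :=
  hA.lt_aleph0.le.trans hκ

theorem exists_closed_superset {α : Type u} {κ : Cardinal.{u}} (hκ : ℵ₀ ≤ κ)
    {Ψ : Finset α → Set α} (hΨ : ∀ L, #(Ψ L) ≤ κ) {S : Set α} (hS : #S ≤ κ) :
    ∃ M, S ⊆ M ∧ #M ≤ κ ∧ ∀ L : Finset α, ↑L ⊆ M → Ψ L ⊆ M := by
  let next (A : Set α) : Set α := A ∪ ⋃ L : Finset A, Ψ (L.map (.subtype (· ∈ A)))
  have hnext : ∀ A : Set α, #A ≤ κ → #(next A) ≤ κ := fun A hA ↦ by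
    classical
    have hL : #(Finset A) ≤ κ := (mk_le_of_surjective List.toFinset_surjective).trans
      ((mk_list_le_max A).trans (max_le hκ hA))
    exact mk_union_le_of_le hκ hA (mk_iUnion_le_of_forall_le hκ (lift_le.2 hL) fun L ↦ hΨ _)
  have hnext_closed : ∀ (A : Set α) (L : Finset α), ↑L ⊆ A → Ψ L ⊆ next A := fun A L hL ↦ by
    classical
    rw [← Finset.subtype_map_of_mem hL]
    exact subset_union_of_subset_right
      (subset_iUnion (fun L : Finset A ↦ Ψ (L.map (.subtype (· ∈ A)))) _) _
  have hmono : Monotone fun n ↦ next^[n] S := monotone_nat_of_le_succ fun n ↦ by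
    rw [Function.iterate_succ_apply']
    exact subset_union_left
  refine ⟨⋃ n, next^[n] S, subset_iUnion (fun n ↦ next^[n] S) 0,
    mk_iUnion_le_of_forall_le hκ (by simpa using hκ) fun n ↦ ?_, fun L hL ↦ ?_⟩
  · induction n with
    | zero => exact hS
    | succ n ih => exact Function.iterate_succ_apply' next n S ▸ hnext _ ih
  · obtain ⟨n, hn⟩ : ∃ n, ↑L ⊆ next^[n] S :=
      hmono.directed_le.exists_mem_subset_of_finset_subset_biUnion hL
    refine (hnext_closed _ L hn).trans ?_
    rw [← Function.iterate_succ_apply' next]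
    exact subset_iUnion (fun n ↦ next^[n] S) (n + 1)

theorem exists_closed_subgraph (G : SimpleGraph V) {κ : Cardinal.{u}} (hκ : ℵ₀ ≤ κ)
    {Ψ : Finset (Sym2 V) → V → V → Set (Sym2 V)} (hΨ : ∀ F x y, #(Ψ F x y) ≤ κ)
    {S : Set (Sym2 V)} (hS : #S ≤ κ) :
    ∃ M ≤ G, G.edgeSet ∩ S ⊆ M.edgeSet ∧ #M.edgeSet ≤ κ ∧
      ∀ F : Finset (Sym2 V), ↑F ⊆ M.edgeSet → ∀ x ∈ M.support, ∀ y ∈ M.support,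
        G.edgeSet ∩ Ψ F x y ⊆ M.edgeSet := by
  classical
  let endpoints (L : Finset (Sym2 V)) : Finset V := L.biUnion Sym2.toFinset
  let Θ (L : Finset (Sym2 V)) : Set (Sym2 V) :=
    ⋃ p : L.powerset × endpoints L × endpoints L, Ψ p.1 p.2.1 p.2.2
  have hΘ : ∀ L, #(Θ L) ≤ κ := fun L ↦
    mk_iUnion_le_of_forall_le hκ (lift_le.2 ((lt_aleph0_of_finite _).le.trans hκ)) fun _ ↦ hΨ _ _ _
  obtain ⟨A, hSA, hAκ, hA⟩ := exists_closed_superset hκ hΘ hS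
  have hM := edgeSet_inf_fromEdgeSet (G := G) A
  refine ⟨G ⊓ fromEdgeSet A, inf_le_left, hM ▸ inter_subset_inter_right _ hSA,
    (mk_le_mk_of_subset (hM ▸ inter_subset_right)).trans hAκ, ?_⟩
  intro F hF x hx y hy
  obtain ⟨x', hx⟩ := (mem_support _).1 hx
  obtain ⟨y', hy⟩ := (mem_support _).1 hy
  rw [← mem_edgeSet, hM] at hx hy
  rw [hM] at hF ⊢
  let L := insert s(x, x') (insert s(y, y') F)
  have hL : (L : Set (Sym2 V)) ⊆ A := by
    simpa [L, insert_subset_iff] using ⟨hx.2, hy.2, hF.trans inter_subset_right⟩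
  have hFL : F ∈ L.powerset :=
    Finset.mem_powerset.2 ((Finset.subset_insert _ _).trans (Finset.subset_insert _ _))
  have hxL : x ∈ endpoints L := by simp [endpoints, L]
  have hyL : y ∈ endpoints L := by simp [endpoints, L]
  exact inter_subset_inter_right _ ((subset_iUnion (fun p : L.powerset × endpoints L × endpoints L ↦
    Ψ p.1 p.2.1 p.2.2) (⟨F, hFL⟩, ⟨x, hxL⟩, ⟨y, hyL⟩)).trans (hA L hL))

/-! ### The filtration -/

lemma exists_subset_image_Iio_ord {α : Type u} [Nonempty α] (s : Set α) :
    ∃ f : Ordinal.{u} → α, s ⊆ f '' Iio (#s).ord := by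
  have hcard : Cardinal.lift.{u + 1} #s = Cardinal.lift.{u} #(Iio (#s).ord) := by
    simp [Cardinal.mk_Iio_ordinal]
  obtain ⟨g⟩ := Cardinal.lift_mk_eq'.1 hcard
  refine ⟨Function.extend (↑) (fun i ↦ (g.symm i : α)) fun _ ↦ Classical.arbitrary α,
    fun a ha ↦ ⟨g ⟨a, ha⟩, (g ⟨a, ha⟩).2, ?_⟩⟩
  simp

lemma mk_image_Iic_le {α : Type u} (f : Ordinal.{u} → α) (o : Ordinal.{u}) :
    #(f '' Iic o) ≤ o.card + 1 := by
  rw [← Cardinal.lift_le.{u + 1}]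
  refine mk_image_le_lift.trans_eq ?_
  rw [← Iio_succ_eq_Iic, Cardinal.mk_Iio_ordinal]
  simp

/-- `f x y` enumerates edges of a graph in such a way that if some set `B` of edges separates `x`
from `y` in `G`, then so do the values of `f x y` below the initial ordinal of `#B`. -/
def EnumeratesSeparators (G : SimpleGraph V) (f : V → V → Ordinal.{u} → Sym2 V) : Prop :=
  ∀ x y (B : Set (Sym2 V)), ¬(G.deleteEdges B).Reachable x y →
    ¬(G.deleteEdges (f x y '' Iio (#B).ord)).Reachable x y

lemma exists_enumeratesSeparators (G : SimpleGraph V) : ∃ f, EnumeratesSeparators G f := by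
  suffices h : ∀ x y, ∃ f : Ordinal.{u} → Sym2 V, ∀ B : Set (Sym2 V),
      ¬(G.deleteEdges B).Reachable x y → ¬(G.deleteEdges (f '' Iio (#B).ord)).Reachable x y by
    choose f hf using h
    exact ⟨f, hf⟩
  intro x y
  have : Nonempty (Sym2 V) := ⟨s(x, y)⟩
  by_cases hsep : ∃ B : Set (Sym2 V), ¬(G.deleteEdges B).Reachable x y
  · obtain ⟨A, hA, hmin⟩ := exists_minimalFor_of_wellFoundedLT
      (fun B : Set (Sym2 V) ↦ ¬(G.deleteEdges B).Reachable x y) (fun B ↦ #B) hsep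
    obtain ⟨f, hf⟩ := exists_subset_image_Iio_ord A
    refine ⟨f, fun B hB hreach ↦ hA (hreach.mono (deleteEdges_anti (hf.trans ?_)))⟩
    have hle : #A ≤ #B := (le_total #A #B).elim id (hmin hB)
    exact image_mono (Iio_subset_Iio (ord_le_ord.2 hle))
  · exact ⟨fun _ ↦ s(x, y), fun B hB ↦ absurd ⟨B, hB⟩ hsep⟩

lemma exists_finite_edges_of_reachable {x y : V} (h : G.Reachable x y) :
    ∃ P ⊆ G.edgeSet, P.Finite ∧ ∀ H : SimpleGraph V, P ⊆ H.edgeSet → H.Reachable x y :=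
  let ⟨w⟩ := h
  ⟨{e | e ∈ w.edges}, w.edges_subset_edgeSet, w.edges.finite_toSet,
    fun H hH ↦ ⟨w.transfer H hH⟩⟩

/-- One step of the filtration of `G`: a subgraph `M` with at most `κ` edges that extends `N`,
contains the edge `e` of `G`, contains the edges of `G` in `Ψ x y` for all its vertices `x` and `y`,
and for which `M \ N` reflects reachability in `G \ N`. -/
structure IsClosedExtension (G : SimpleGraph V) (Ψ : V → V → Set (Sym2 V)) (e : Sym2 V)
    (κ : Cardinal.{u}) (N M : SimpleGraph V) : Prop where
  base_le : N ≤ M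
  le : M ≤ G
  mem : e ∈ G.edgeSet → e ∈ M.edgeSet
  mk_le : #M.edgeSet ≤ κ
  closed : ∀ x ∈ M.support, ∀ y ∈ M.support, G.edgeSet ∩ Ψ x y ⊆ M.edgeSet
  reflects : ReflectsReachability (M \ N) (G \ N)

lemma exists_isClosedExtension {Ψ : V → V → Set (Sym2 V)} {κ : Cardinal.{u}} (hκ : ℵ₀ ≤ κ)
    (hΨ : ∀ x y, #(Ψ x y) ≤ κ) (e : Sym2 V) {N : SimpleGraph V} (hNG : N ≤ G)
    (hN : #N.edgeSet ≤ κ) : ∃ M, IsClosedExtension G Ψ e κ N M := by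
  -- `P F x y` is the edge set of a walk from `x` to `y` avoiding `N` and `F`, if there is one.
  have hwalk : ∀ (F : Finset (Sym2 V)) x y, ∃ P : Set (Sym2 V), P.Finite ∧
      (((G \ N).deleteEdges F).Reachable x y → P ⊆ ((G \ N).deleteEdges F).edgeSet ∧
        ∀ H : SimpleGraph V, P ⊆ H.edgeSet → H.Reachable x y) := fun F x y ↦ by
    by_cases h : ((G \ N).deleteEdges F).Reachable x y
    · obtain ⟨P, hPG, hP, hreach⟩ := exists_finite_edges_of_reachable h
      exact ⟨P, hP, fun _ ↦ ⟨hPG, hreach⟩⟩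
    · exact ⟨∅, finite_empty, fun h' ↦ absurd h' h⟩
  choose P hPfin hP using hwalk
  obtain ⟨M, hMG, hSM, hMκ, hM⟩ := exists_closed_subgraph G hκ (S := insert e N.edgeSet)
    (fun F x y ↦ mk_union_le_of_le hκ (hΨ x y) (mk_le_of_finite hκ (hPfin F x y)))
    (mk_union_le_of_le hκ (mk_le_of_finite hκ (finite_singleton e)) hN)
  refine ⟨M, edgeSet_subset_edgeSet.1 fun e he ↦ hSM ⟨edgeSet_mono hNG he, .inr he⟩, hMG,
    fun he ↦ hSM ⟨he, .inl rfl⟩, hMκ, fun x hx y hy ↦ ?_, fun F hFM hF x hx y hy hreach ↦ ?_⟩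
  · exact (inter_subset_inter_right _ subset_union_left).trans (hM ∅ (by simp) x hx y hy)
  · lift F to Finset (Sym2 V) using hF
    obtain ⟨hPG, hPreach⟩ := hP F x y hreach
    simp only [edgeSet_deleteEdges, edgeSet_sdiff] at hPG hFM
    refine hPreach _ fun e he ↦ ?_
    have heM : e ∈ M.edgeSet := hM F (hFM.trans sdiff_subset) x (support_mono sdiff_le hx)
      y (support_mono sdiff_le hy) ⟨(hPG he).1.1, .inr he⟩
    simpa only [edgeSet_deleteEdges, edgeSet_sdiff] using ⟨⟨heM, (hPG he).1.2⟩, (hPG he).2⟩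

lemma support_iSup {ι : Sort*} (H : ι → SimpleGraph V) :
    (⨆ i, H i).support = ⋃ i, (H i).support := by
  ext x
  simp only [mem_support, iSup_adj, mem_iUnion]
  exact exists_comm

lemma mk_edgeSet_iSup_lt_le {κ : Cardinal.{u}} (hκ : ℵ₀ ≤ κ) {α : Ordinal.{u}} (hα : α.card ≤ κ)
    {M : Ordinal.{u} → SimpleGraph V} (hM : ∀ β < α, #(M β).edgeSet ≤ κ) :
    #(⨆ β < α, M β).edgeSet ≤ κ := by
  simpa only [edgeSet_iSup] using mk_biUnion_le_of_le hα hκ (fun β ↦ (M β).edgeSet) hM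

lemma aleph0_le_card_omega0_add (α : Ordinal.{u}) : ℵ₀ ≤ (ω + α).card := by
  simp

/-- `M` is an increasing sequence of subgraphs of `G`, where `M α` contains the edge `e α` and is
closed under the first values of the functions `f x y`. Bounds are by `ω + α` rather than `α`, so
that they are always infinite. -/
def IsEdgeFiltration (G : SimpleGraph V) (e : Ordinal.{u} → Sym2 V)
    (f : V → V → Ordinal.{u} → Sym2 V) (M : Ordinal.{u} → SimpleGraph V) : Prop :=
  ∀ α, IsClosedExtension G (fun x y ↦ f x y '' Iic (ω + α)) (e α) (ω + α).card
    (⨆ β < α, M β) (M α)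

lemma exists_isEdgeFiltration (G : SimpleGraph V) (e : Ordinal.{u} → Sym2 V)
    (f : V → V → Ordinal.{u} → Sym2 V) : ∃ M, IsEdgeFiltration G e f M := by
  refine exists_forall_iSup_lt (q := fun α ↦ IsClosedExtension G
    (fun x y ↦ f x y '' Iic (ω + α)) (e α) (ω + α).card) fun α M ih ↦ ?_
  have hκ := aleph0_le_card_omega0_add α
  refine exists_isClosedExtension hκ (fun x y ↦ ?_) (e α) (iSup₂_le fun β hβ ↦ (ih β hβ).le)
    (mk_edgeSet_iSup_lt_le hκ (Ordinal.card_le_card le_add_self) fun β hβ ↦ ?_)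
  · exact (mk_image_Iic_le (f x y) (ω + α)).trans_eq (add_one_eq hκ)
  · exact (ih β hβ).mk_le.trans (Ordinal.card_le_card (by gcongr))

namespace IsEdgeFiltration

variable {e : Ordinal.{u} → Sym2 V} {f : V → V → Ordinal.{u} → Sym2 V}
  {M : Ordinal.{u} → SimpleGraph V}

lemma mk_edgeSet_iSup_lt_le (hM : IsEdgeFiltration G e f M) (α : Ordinal.{u}) :
    #(⨆ β < α, M β).edgeSet ≤ (ω + α).card :=
  (mk_le_mk_of_subset (edgeSet_mono (hM α).base_le)).trans (hM α).mk_le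

protected lemma monotone (hM : IsEdgeFiltration G e f M) : Monotone M :=
  monotone_iff_forall_lt.2 fun {_ β} h ↦
    (le_iSup₂ (f := fun α (_ : α < β) ↦ M α) _ h).trans (hM β).base_le

-- The separators are absorbed one edge at a time, rather than one separator at a time, so that
-- closure passes to the union also when `α` is a limit ordinal.
lemma mem_edgeSet_iSup_lt (hM : IsEdgeFiltration G e f M) {α i : Ordinal.{u}} {x y : V}
    (hx : x ∈ (⨆ β < α, M β).support) (hy : y ∈ (⨆ β < α, M β).support) (hi : i < ω + α)
    (hG : f x y i ∈ G.edgeSet) : f x y i ∈ (⨆ β < α, M β).edgeSet := by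
  simp only [support_iSup, mem_iUnion, exists_prop] at hx hy
  obtain ⟨β, hβ, hxβ⟩ := hx
  obtain ⟨γ, hγ, hyγ⟩ := hy
  obtain ⟨δ, hδ, hiδ⟩ := (Ordinal.lt_add_iff (bot_le.trans_lt hβ).ne').1 hi
  set η := max (max β γ) δ
  have hη : η < α := max_lt (max_lt hβ hγ) hδ
  have hmem : f x y i ∈ (M η).edgeSet := (hM η).closed
    x (support_mono (hM.monotone ((le_max_left β γ).trans (le_max_left _ δ))) hxβ)
    y (support_mono (hM.monotone ((le_max_right β γ).trans (le_max_left _ δ))) hyγ)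
    ⟨hG, i, hiδ.trans (by gcongr; exact le_max_right _ δ), rfl⟩
  exact edgeSet_mono (le_iSup₂ (f := fun β _ ↦ M β) η hη) hmem

lemma evenCuts_sdiff_iSup_lt (hM : IsEdgeFiltration G e f M) (hf : EnumeratesSeparators G f)
    (hG : EvenCuts G) (α : Ordinal.{u}) : EvenCuts (G \ ⨆ β < α, M β) := by
  set N := ⨆ β < α, M β
  refine hG.sdiff fun F hF x hx y hy hreach ↦ ?_
  by_contra hsep
  rw [← deleteEdges_edgeSet, deleteEdges_deleteEdges] at hsep
  have hκ := aleph0_le_card_omega0_add α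
  have hcard : #(N.edgeSet ∪ F : Set (Sym2 V)) ≤ (ω + α).card :=
    mk_union_le_of_le hκ (hM.mk_edgeSet_iSup_lt_le α) (mk_le_of_finite hκ hF)
  refine hf x y _ hsep (hreach.mono ?_)
  rw [← deleteEdges_edgeSet, deleteEdges_eq_inter_edgeSet (f x y '' _)]
  refine deleteEdges_anti ?_
  rintro _ ⟨⟨i, hi, rfl⟩, hiG⟩
  exact hM.mem_edgeSet_iSup_lt hx hy (hi.trans_le (ord_le.2 hcard)) hiG

lemma evenCuts_sdiff (hM : IsEdgeFiltration G e f M) (hf : EnumeratesSeparators G f)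
    (hG : EvenCuts G) (α : Ordinal.{u}) : EvenCuts (M α \ ⨆ β < α, M β) :=
  (hM.evenCuts_sdiff_iSup_lt hf hG α).of_reflectsReachability (sdiff_le_sdiff_right (hM α).le)
    (hM α).reflects

lemma le_iSup_lt (hM : IsEdgeFiltration G e f M) {o : Ordinal.{u}}
    (he : G.edgeSet ⊆ e '' Iio o) : G ≤ ⨆ α < o, M α := by
  refine edgeSet_subset_edgeSet.1 fun _ heG ↦ ?_
  obtain ⟨α, hα, rfl⟩ := he heG
  exact edgeSet_mono (le_iSup₂ (f := fun α _ ↦ M α) α hα) ((hM α).mem heG)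

end IsEdgeFiltration

theorem EvenCuts.cycleDecomposable (hG : EvenCuts G) : CycleDecomposable G := by
  induction hn : #G.edgeSet using WellFoundedLT.induction generalizing G with | ind n ih
  subst hn
  by_cases hcount : G.edgeSet.Countable
  · exact hG.cycleDecomposable_of_countable hcount
  rw [← le_aleph0_iff_set_countable, not_le] at hcount
  have : Nonempty (Sym2 V) := ⟨(mk_ne_zero_iff.1 (aleph0_pos.trans hcount).ne').some⟩
  obtain ⟨e, he⟩ := exists_subset_image_Iio_ord G.edgeSet
  obtain ⟨f, hf⟩ := exists_enumeratesSeparators G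
  obtain ⟨M, hM⟩ := exists_isEdgeFiltration G e f
  have hle : G ≤ ⨆ α < (#G.edgeSet).ord, M α := hM.le_iSup_lt he
  have hsup : ⨆ α, M α = G := (iSup_le fun α ↦ (hM α).le).antisymm (hle.trans (iSup₂_le_iSup _ M))
  refine hsup ▸ CycleDecomposable.of_sdiff_iSup_lt fun α ↦ ?_
  obtain hα | hα := lt_or_ge α (#G.edgeSet).ord
  · refine ih _ ?_ (hM.evenCuts_sdiff hf hG α) rfl
    calc #(M α \ ⨆ β < α, M β).edgeSet
      _ ≤ #(M α).edgeSet := mk_le_mk_of_subset (edgeSet_mono sdiff_le)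
      _ ≤ ℵ₀ + α.card := by simpa using (hM α).mk_le
      _ < #G.edgeSet := add_lt_of_lt hcount.le hcount (lt_ord.1 hα)
  · have hbot : M α \ ⨆ β < α, M β = ⊥ := sdiff_eq_bot_iff.2 ((hM α).le.trans
      (hle.trans (biSup_mono fun β hβ ↦ hβ.trans_le hα)))
    exact hbot ▸ cycleDecomposable_bot

/-- **Nash-Williams' theorem.** The edge set of an undirected graph can be
partitioned into cycles if and only if every cut is infinite or even. -/
theorem edge_partition_into_cycles_iff_cuts_infinite_or_even {V : Type*}
    (G : SimpleGraph V) :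
    (∃ P : Set (Set (Sym2 V)), (∀ C ∈ P, IsCycleEdgeSet G C) ∧
        P.PairwiseDisjoint id ∧ ⋃₀ P = G.edgeSet) ↔
      ∀ X : Set V, (cutEdges G X).Infinite ∨ Even (cutEdges G X).ncard := by
  have hcuts : EvenCuts G ↔ ∀ X : Set V, (cutEdges G X).Infinite ∨ Even (cutEdges G X).ncard :=
    forall_congr' fun X ↦ by rw [or_iff_not_imp_left, not_infinite]
  rw [← hcuts]
  exact ⟨CycleDecomposable.evenCuts, EvenCuts.cycleDecomposable⟩
end

section
/- Let D = (V, A) be an unbalanced digraph. Then D has a weakly connected component with vertex set Z, and a partition of Z into two nonempty sets X and Y, such that the induced subdigraphs D[X] and D[Y] are both weakly connected and X is overloaded in D, i.e., |out_D(X)| < |in_D(X)|. -/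
/-- Adjacency in the underlying undirected graph of the subdigraph of `A`
induced by the vertex set `S`. -/
def AdjOn {V : Type*} (A : Set (V × V)) (S : Set V) (u v : V) : Prop :=
  u ∈ S ∧ v ∈ S ∧ ((u, v) ∈ A ∨ (v, u) ∈ A)

/-- Reachability in the underlying undirected graph of the subdigraph of `A`
induced by the vertex set `S`. -/
def ReachOn {V : Type*} (A : Set (V × V)) (S : Set V) : V → V → Prop :=
  Relation.ReflTransGen (AdjOn A S)

/-- `Y` is the vertex set of a weakly connected component of the subdigraph of
`A` induced by the vertex set `S`. -/
def IsWeakComponent {V : Type*} (A : Set (V × V)) (S : Set V) (Y : Set V) : Prop :=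
  ∃ y ∈ S, Y = {v | ReachOn A S y v}

/-- The subdigraph of `A` induced by the vertex set `X` is weakly connected. -/
def IsWeaklyConnectedOn {V : Type*} (A : Set (V × V)) (X : Set V) : Prop :=
  X.Nonempty ∧ ∀ u ∈ X, ∀ v ∈ X, ReachOn A X u v

open Set
open scoped Cardinal

section

variable {V : Type*} {A : Set (V × V)} {S T X Z B Y C C' : Set V} {u v w b : V}

theorem AdjOn.symm (h : AdjOn A S u v) : AdjOn A S v u :=
  ⟨h.2.1, h.1, h.2.2.symm⟩

theorem AdjOn.mono (hST : S ⊆ T) (h : AdjOn A S u v) : AdjOn A T u v :=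
  ⟨hST h.1, hST h.2.1, h.2.2⟩

namespace ReachOn

theorem refl (v : V) : ReachOn A S v v :=
  Relation.ReflTransGen.refl

theorem trans (huv : ReachOn A S u v) (hvw : ReachOn A S v w) : ReachOn A S u w :=
  Relation.ReflTransGen.trans huv hvw

theorem symm (h : ReachOn A S u v) : ReachOn A S v u :=
  have : Std.Symm (AdjOn A S) := ⟨fun _ _ => AdjOn.symm⟩
  Relation.ReflTransGen.stdSymm.symm _ _ h

theorem mono (hST : S ⊆ T) (h : ReachOn A S u v) : ReachOn A T u v :=
  Relation.ReflTransGen.mono (fun _ _ => AdjOn.mono hST) _ _ h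

theorem mem (h : ReachOn A S u v) (hu : u ∈ S) : v ∈ S := by
  induction h with
  | refl => exact hu
  | tail _ hvw _ => exact hvw.2.1

end ReachOn

theorem isWeaklyConnectedOn_of_forall_reachOn (hb : b ∈ X) (h : ∀ v ∈ X, ReachOn A X v b) :
    IsWeaklyConnectedOn A X :=
  ⟨⟨b, hb⟩, fun u hu v hv => (h u hu).trans (h v hv).symm⟩

theorem exists_isWeakComponent_mem (A : Set (V × V)) (hv : v ∈ S) :
    ∃ C, IsWeakComponent A S C ∧ v ∈ C :=
  ⟨{w | ReachOn A S v w}, ⟨v, hv, rfl⟩, ReachOn.refl v⟩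

namespace IsWeakComponent

theorem subset (hC : IsWeakComponent A S C) : C ⊆ S := by
  obtain ⟨y, hy, rfl⟩ := hC
  exact fun v hv => hv.mem hy

theorem reachOn (hC : IsWeakComponent A S C) (hu : u ∈ C) (hv : v ∈ C) : ReachOn A S u v := by
  obtain ⟨y, -, rfl⟩ := hC
  exact hu.symm.trans hv

theorem mem_of_reachOn (hC : IsWeakComponent A S C) (hu : u ∈ C) (h : ReachOn A S u v) :
    v ∈ C := by
  obtain ⟨y, -, rfl⟩ := hC
  exact hu.trans h

theorem mem_iff_of_adjOn (hC : IsWeakComponent A S C) (h : AdjOn A S u v) : u ∈ C ↔ v ∈ C :=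
  ⟨fun hu => hC.mem_of_reachOn hu (.single h), fun hv => hC.mem_of_reachOn hv (.single h.symm)⟩

theorem eq_of_mem (hC : IsWeakComponent A S C) (hC' : IsWeakComponent A S C') (hv : v ∈ C)
    (hv' : v ∈ C') : C = C' :=
  Subset.antisymm (fun _ hw => hC'.mem_of_reachOn hv' (hC.reachOn hv hw))
    fun _ hw => hC.mem_of_reachOn hv (hC'.reachOn hv' hw)

theorem isWeaklyConnectedOn (hC : IsWeakComponent A S C) : IsWeaklyConnectedOn A C := by
  obtain ⟨y, -, rfl⟩ := hC
  refine isWeaklyConnectedOn_of_forall_reachOn (ReachOn.refl y) fun v hv => ReachOn.symm ?_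
  induction hv with
  | refl => exact .refl y
  | tail hyu huv ih => exact ih.tail ⟨hyu, hyu.tail huv, huv.2.2⟩

theorem inArcs_subset (hC : IsWeakComponent A S C) : inArcs A C ⊆ inArcs A S :=
  fun _ ⟨he, htail, hhead⟩ =>
    have hheadS := hC.subset hhead
    ⟨he, fun htailS => htail ((hC.mem_iff_of_adjOn ⟨htailS, hheadS, .inl he⟩).2 hhead), hheadS⟩

theorem outArcs_subset (hC : IsWeakComponent A S C) : outArcs A C ⊆ outArcs A S :=
  fun _ ⟨he, htail, hhead⟩ =>
    have htailS := hC.subset htail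
    ⟨he, htailS, fun hheadS => hhead ((hC.mem_iff_of_adjOn ⟨htailS, hheadS, .inl he⟩).1 htail)⟩

end IsWeakComponent

theorem IsWeaklyConnectedOn.exists_isWeakComponent_superset (hX : IsWeaklyConnectedOn A X)
    (hXS : X ⊆ S) : ∃ C, IsWeakComponent A S C ∧ X ⊆ C := by
  obtain ⟨⟨x, hx⟩, hreach⟩ := hX
  obtain ⟨C, hC, hxC⟩ := exists_isWeakComponent_mem A (hXS hx)
  exact ⟨C, hC, fun v hv => hC.mem_of_reachOn hxC ((hreach x hx v hv).mono hXS)⟩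

theorem inArcs_eq_iUnion_isWeakComponent (A : Set (V × V)) (S : Set V) :
    inArcs A S = ⋃ C : {C // IsWeakComponent A S C}, inArcs A C.1 := by
  refine Subset.antisymm (fun e he => ?_) (iUnion_subset fun C => C.2.inArcs_subset)
  obtain ⟨C, hC, hhead⟩ := exists_isWeakComponent_mem A he.2.2
  exact mem_iUnion.2 ⟨⟨C, hC⟩, he.1, fun htail => he.2.1 (hC.subset htail), hhead⟩

theorem outArcs_eq_iUnion_isWeakComponent (A : Set (V × V)) (S : Set V) :
    outArcs A S = ⋃ C : {C // IsWeakComponent A S C}, outArcs A C.1 := by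
  refine Subset.antisymm (fun e he => ?_) (iUnion_subset fun C => C.2.outArcs_subset)
  obtain ⟨C, hC, htail⟩ := exists_isWeakComponent_mem A he.2.1
  exact mem_iUnion.2 ⟨⟨C, hC⟩, he.1, htail, fun hhead => he.2.2 (hC.subset hhead)⟩

theorem mk_inArcs_eq_sum_isWeakComponent (A : Set (V × V)) (S : Set V) :
    #(inArcs A S) = Cardinal.sum fun C : {C // IsWeakComponent A S C} => #(inArcs A C.1) := by
  rw [inArcs_eq_iUnion_isWeakComponent]
  refine Cardinal.mk_iUnion_eq_sum_mk fun C C' hne => disjoint_left.2 fun e he he' => hne ?_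
  exact Subtype.ext (C.2.eq_of_mem C'.2 he.2.2 he'.2.2)

theorem mk_outArcs_eq_sum_isWeakComponent (A : Set (V × V)) (S : Set V) :
    #(outArcs A S) = Cardinal.sum fun C : {C // IsWeakComponent A S C} => #(outArcs A C.1) := by
  rw [outArcs_eq_iUnion_isWeakComponent]
  refine Cardinal.mk_iUnion_eq_sum_mk fun C C' hne => disjoint_left.2 fun e he he' => hne ?_
  exact Subtype.ext (C.2.eq_of_mem C'.2 he.2.1 he'.2.1)

theorem exists_isWeakComponent_mk_outArcs_lt_mk_inArcs (h : #(outArcs A S) < #(inArcs A S)) :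
    ∃ C, IsWeakComponent A S C ∧ #(outArcs A C) < #(inArcs A C) := by
  contrapose! h
  rw [mk_inArcs_eq_sum_isWeakComponent, mk_outArcs_eq_sum_isWeakComponent]
  exact Cardinal.sum_le_sum _ _ fun C => h C.1 C.2

theorem exists_isWeakComponent_mk_inArcs_lt_mk_outArcs (h : #(inArcs A S) < #(outArcs A S)) :
    ∃ C, IsWeakComponent A S C ∧ #(inArcs A C) < #(outArcs A C) := by
  contrapose! h
  rw [mk_inArcs_eq_sum_isWeakComponent, mk_outArcs_eq_sum_isWeakComponent]
  exact Cardinal.sum_le_sum _ _ fun C => h C.1 C.2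

theorem inArcs_sdiff_s5 (hZ : ∀ e ∈ A, e.1 ∈ Z ↔ e.2 ∈ Z) (hXZ : X ⊆ Z) :
    inArcs A (Z \ X) = outArcs A X := by
  ext e
  have := hZ e
  have := @hXZ e.1
  simp only [inArcs, outArcs, mem_ofPred_eq, mem_sdiff]
  tauto

theorem outArcs_sdiff_s5 (hZ : ∀ e ∈ A, e.1 ∈ Z ↔ e.2 ∈ Z) (hXZ : X ⊆ Z) :
    outArcs A (Z \ X) = inArcs A X := by
  rw [← inArcs_sdiff_s5 hZ sdiff_subset, sdiff_sdiff_cancel_left hXZ]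

theorem exists_mk_outArcs_lt_mk_inArcs_of_not_isBalanced (h : ¬ IsBalanced A) :
    ∃ S, #(outArcs A S) < #(inArcs A S) := by
  obtain ⟨S, hS⟩ := not_forall.1 h
  rcases lt_or_gt_of_ne hS with hlt | hlt
  · have huniv : ∀ e ∈ A, e.1 ∈ univ ↔ e.2 ∈ univ := fun _ _ => Iff.rfl
    refine ⟨univ \ S, ?_⟩
    rwa [inArcs_sdiff_s5 huniv (subset_univ S), outArcs_sdiff_s5 huniv (subset_univ S)]
  · exact ⟨S, hlt⟩

theorem IsWeaklyConnectedOn.sdiff_isWeakComponent (hZ : IsWeaklyConnectedOn A Z)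
    (hB : IsWeaklyConnectedOn A B) (hBZ : B ⊆ Z) (hY : IsWeakComponent A (Z \ B) Y) :
    IsWeaklyConnectedOn A (Z \ Y) := by
  have hBX : B ⊆ Z \ Y := fun v hv => ⟨hBZ hv, fun hvY => (hY.subset hvY).2 hv⟩
  obtain ⟨b, hb⟩ := hB.1
  refine isWeaklyConnectedOn_of_forall_reachOn (hBX hb) fun v hv => ?_
  induction hZ.2 v hv.1 b (hBZ hb) using Relation.ReflTransGen.head_induction_on with
  | refl => exact .refl b
  | @head u w huw _ ih =>
    by_cases huB : u ∈ B
    · exact (hB.2 u huB b hb).mono hBX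
    · have hwY : w ∉ Y := fun hwY =>
        hv.2 ((hY.mem_iff_of_adjOn ⟨⟨hv.1, huB⟩, hY.subset hwY, huw.2.2⟩).2 hwY)
      have hw : w ∈ Z \ Y := ⟨huw.2.1, hwY⟩
      exact (ih hw).head ⟨hv, hw, huw.2.2⟩

end

/-- In an unbalanced loop-free digraph there is a weakly connected component
`Z` together with a partition of `Z` into `X` and `Y` such that the induced
subdigraphs on `X` and on `Y` are weakly connected and `X` is overloaded. -/
theorem exists_component_partition_with_overloaded_part {V : Type*}
    (A : Set (V × V)) (hA : ∀ e ∈ A, e.1 ≠ e.2) (hub : ¬ IsBalanced A) :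
    ∃ Z X Y : Set V, IsWeakComponent A Set.univ Z ∧
      X ∪ Y = Z ∧ Disjoint X Y ∧ X.Nonempty ∧ Y.Nonempty ∧
      IsWeaklyConnectedOn A X ∧ IsWeaklyConnectedOn A Y ∧
      Cardinal.mk (outArcs A X) < Cardinal.mk (inArcs A X) := by
  obtain ⟨S, hS⟩ := exists_mk_outArcs_lt_mk_inArcs_of_not_isBalanced hub
  obtain ⟨B, hBS, hB⟩ := exists_isWeakComponent_mk_outArcs_lt_mk_inArcs hS
  have hBconn := hBS.isWeaklyConnectedOn
  obtain ⟨Z, hZ, hBZ⟩ := hBconn.exists_isWeakComponent_superset (subset_univ B)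
  have hZarc : ∀ e ∈ A, e.1 ∈ Z ↔ e.2 ∈ Z := fun _ he =>
    hZ.mem_iff_of_adjOn ⟨mem_univ _, mem_univ _, .inl he⟩
  rw [← inArcs_sdiff_s5 hZarc hBZ, ← outArcs_sdiff_s5 hZarc hBZ] at hB
  obtain ⟨Y, hY, hlt⟩ := exists_isWeakComponent_mk_inArcs_lt_mk_outArcs hB
  have hYZ : Y ⊆ Z := hY.subset.trans sdiff_subset
  rw [← inArcs_sdiff_s5 hZarc hYZ, ← outArcs_sdiff_s5 hZarc hYZ] at hlt
  have hYconn := hY.isWeaklyConnectedOn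
  have hXconn := hZ.isWeaklyConnectedOn.sdiff_isWeakComponent hBconn hBZ hY
  exact ⟨Z, Z \ Y, Y, hZ, sdiff_union_of_subset hYZ, disjoint_sdiff_left, hXconn.1, hYconn.1,
    hXconn, hYconn, hlt⟩
end

section
/- Let D = (V, A) be a balanced digraph. Then every arc of D lies on a dicycle: for each (u, v) ∈ A there is a dicycle C of D with (u, v) ∈ C. -/
section InjectiveSeries

open Relation Function
open scoped SetRel

variable {α : Type*} {r : SetRel α α} {a b : α} {p : RelSeries r}

theorem nodup_toList_iff_injective : p.toList.Nodup ↔ Injective p :=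
  List.nodup_ofFn

theorem injective_relSeries_cons (hp : Injective p) (hrel : a ~[r] p.head) (ha : a ∉ p) :
    Injective (p.cons a hrel) := by
  rw [← nodup_toList_iff_injective, RelSeries.toList_cons, List.nodup_cons]
  exact ⟨RelSeries.mem_toList.not.2 ha, nodup_toList_iff_injective.2 hp⟩

theorem injective_relSeries_drop (hp : Injective p) (i : Fin (p.length + 1)) :
    Injective (p.drop i) := by
  intro j k hjk
  simpa only [Fin.mk.injEq, Nat.add_right_cancel_iff, ← Fin.ext_iff] using hp hjk

theorem exists_injective_relSeries_of_reflTransGen (h : ReflTransGen (· ~[r] ·) a b) :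
    ∃ p : RelSeries r, p.head = a ∧ p.last = b ∧ Injective p := by
  induction h using ReflTransGen.head_induction_on with
  | refl => exact ⟨.singleton r b, rfl, rfl, injective_of_subsingleton (α := Fin 1) _⟩
  | @head a c hac _ ih =>
    obtain ⟨p, rfl, hlast, hp⟩ := ih
    by_cases ha : a ∈ p
    · obtain ⟨i, rfl⟩ := ha
      exact ⟨p.drop i, p.head_drop i, (p.last_drop i).trans hlast, injective_relSeries_drop hp i⟩
    · exact ⟨p.cons a hac, p.head_cons a hac, (p.last_cons a hac).trans hlast,
        injective_relSeries_cons hp hac ha⟩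

end InjectiveSeries

section Digraph

open Relation Function
open scoped SetRel

variable {V : Type*} {A : Set (V × V)} {u v : V}

-- The index type `Fin (p.length + 1)` of `p` is by definition `ZMod (p.length + 1)`.
theorem isDicycle_of_injective_relSeries {p : RelSeries A} (hp : Injective p)
    (hlen : p.length ≠ 0) (hclose : (p.last, p.head) ∈ A) :
    IsDicycle A {e | ∃ i, e = (p i, p (i + 1))} := by
  refine ⟨p.length + 1, p, by omega, hp, rfl, ?_⟩
  rintro _ ⟨i, rfl⟩
  induction i using Fin.lastCases with
  | last => rwa [Fin.last_add_one]
  | cast j =>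
    rw [Fin.coeSucc_eq_succ]
    exact p.step j

theorem exists_isDicycle_of_reflTransGen (huv : (u, v) ∈ A) (hne : u ≠ v)
    (hvu : ReflTransGen (· ~[A] ·) v u) : ∃ C, IsDicycle A C ∧ (u, v) ∈ C := by
  obtain ⟨p, rfl, rfl, hp⟩ := exists_injective_relSeries_of_reflTransGen hvu
  have hlen : p.length ≠ 0 := fun h => hne (congrArg p (Fin.ext h))
  refine ⟨_, isDicycle_of_injective_relSeries hp hlen huv, Fin.last p.length, ?_⟩
  rw [Fin.last_add_one, p.apply_last, p.apply_zero]

theorem outArcs_setOf_reflTransGen (A : Set (V × V)) (v : V) :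
    outArcs A {w | ReflTransGen (· ~[A] ·) v w} = ∅ :=
  Set.eq_empty_of_forall_notMem fun _ ⟨hab, hva, hvb⟩ => hvb (hva.tail hab)

theorem reflTransGen_of_forall_inArcs_eq_empty
    (hcut : ∀ X, outArcs A X = ∅ → inArcs A X = ∅) (huv : (u, v) ∈ A) :
    ReflTransGen (· ~[A] ·) v u := by
  by_contra hvu
  exact (hcut _ (outArcs_setOf_reflTransGen A v)).subset ⟨huv, hvu, ReflTransGen.refl⟩

theorem IsBalanced.inArcs_eq_empty (hA : IsBalanced A) {X : Set V} (hX : outArcs A X = ∅) :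
    inArcs A X = ∅ := by
  rw [← Cardinal.mk_set_eq_zero_iff, hA X, hX, Cardinal.mk_eq_zero]

theorem balanced_arc_mem_dicycle_general (hcut : ∀ X, outArcs A X = ∅ → inArcs A X = ∅)
    (huv : (u, v) ∈ A) (hne : u ≠ v) : ∃ C, IsDicycle A C ∧ (u, v) ∈ C :=
  exists_isDicycle_of_reflTransGen huv hne (reflTransGen_of_forall_inArcs_eq_empty hcut huv)

end Digraph

/-- In a balanced loop-free digraph every arc lies on a dicycle. -/
theorem balanced_arc_mem_dicycle {V : Type*} (A : Set (V × V))
    (hA : ∀ e ∈ A, e.1 ≠ e.2) (hbal : IsBalanced A)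
    (u v : V) (huv : (u, v) ∈ A) :
    ∃ C : Set (V × V), IsDicycle A C ∧ (u, v) ∈ C := by
  exact balanced_arc_mem_dicycle_general (fun _ => hbal.inArcs_eq_empty) huv (hA (u, v) huv)
end

section
/- Let G be a simple undirected graph on a vertex type V, let E₀ be a set of edges of G, let H be the graph G with the edges of E₀ deleted, and let W be the set of all endpoints of edges in E₀. Let κ be an infinite cardinal with |E₀| ≤ κ. Assume that for all distinct u, v ∈ W lying in the same connected component of H, no set of at most κ edges of G separates u from v in G (i.e., after deleting any edge set of cardinality at most κ from G, u and v remain connected). Let x ≠ y be vertices in the same connected component of H, and let F be a set of edges of H with |F| ≤ κ that separates x and y in H. Then F separates x and y in the whole graph G. -/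
/-!
Deleting `F ∪ E₀` from `G` shows that vertices of `W` lying in one component of `H` also lie in one
component of `H - F`. Suppose `G - F` connects `x` to `y` but `H - F` does not. Then a walk in
`G - F` has to leave the `H - F` component of `x` along an edge of `E₀`, so that component contains
some `u ∈ W`; likewise the component of `y` contains some `v ∈ W`. Since `x` and `y` are connected
in `H`, so are `u` and `v`, and hence `u` and `v` are connected in `H - F`, a contradiction.
-/

section Endpoints

variable {V : Type*} {K H : SimpleGraph V} {E : Set (Sym2 V)} {a b : V}

/-- The set of endpoints of a set `E` of edges, called `W` in the theorem. The edges are arbitrary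
unordered pairs, not tied to a graph. -/
def endpoints (E : Set (Sym2 V)) : Set V :=
  {v | ∃ e ∈ E, v ∈ e}

theorem exists_endpoint_reachable_of_not_reachable_deleteEdges (hab : K.Reachable a b)
    (hsep : ¬ (K.deleteEdges E).Reachable a b) :
    ∃ w ∈ endpoints E, (K.deleteEdges E).Reachable a w := by
  obtain ⟨p⟩ := hab
  obtain ⟨d, -, hfst, hsnd⟩ :=
    p.exists_boundary_dart {v | (K.deleteEdges E).Reachable a v} (.refl a) hsep
  have hd : d.edge ∈ E := by
    by_contra hd
    have hadj : (K.deleteEdges E).Adj d.fst d.snd := SimpleGraph.deleteEdges_adj.2 ⟨d.adj, hd⟩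
    exact hsnd (hfst.trans hadj.reachable)
  exact ⟨d.fst, ⟨d.edge, hd, Sym2.mem_mk_left _ _⟩, hfst⟩

theorem reachable_deleteEdges_of_forall_endpoints (hle : K.deleteEdges E ≤ H)
    (hE : ∀ u ∈ endpoints E, ∀ v ∈ endpoints E, H.Reachable u v →
      (K.deleteEdges E).Reachable u v)
    (hH : H.Reachable a b) (hK : K.Reachable a b) : (K.deleteEdges E).Reachable a b := by
  by_contra hsep
  obtain ⟨u, hu, hau⟩ := exists_endpoint_reachable_of_not_reachable_deleteEdges hK hsep
  obtain ⟨v, hv, hbv⟩ :=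
    exists_endpoint_reachable_of_not_reachable_deleteEdges hK.symm (mt .symm hsep)
  have huv : H.Reachable u v := (hau.mono hle).symm.trans (hH.trans (hbv.mono hle))
  exact hsep (hau.trans ((hE u hu v hv huv).trans hbv.symm))

end Endpoints

/-- **Combinatorial separation lemma** (underlying Proposition 4.4 of the paper).
Let `H` be the graph `G` with the edges of `E₀` deleted and let `W` be the set of
endpoints of edges of `E₀`, where `|E₀| ≤ κ` for an infinite cardinal `κ`.
Assume that no pair of distinct vertices of `W` lying in the same component of
`H` can be separated in `G` by at most `κ` edges. If a set `F` of at most `κ`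
edges of `H` separates two vertices `x ≠ y` lying in the same component of `H`,
then `F` separates `x` and `y` in the whole graph `G`. -/
theorem separates_in_whole_graph {V : Type*} (G : SimpleGraph V)
    (E₀ : Set (Sym2 V)) (hE₀ : E₀ ⊆ G.edgeSet)
    (H : SimpleGraph V) (hH : H = G.deleteEdges E₀)
    (W : Set V) (hW : W = {v | ∃ e ∈ E₀, v ∈ e})
    (κ : Cardinal) (hκ : Cardinal.aleph0 ≤ κ) (hE₀κ : Cardinal.mk E₀ ≤ κ)
    (hconn : ∀ u ∈ W, ∀ v ∈ W, u ≠ v → H.Reachable u v →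
      ∀ F' : Set (Sym2 V), F' ⊆ G.edgeSet → Cardinal.mk F' ≤ κ →
        (G.deleteEdges F').Reachable u v)
    (x y : V) (hxy : x ≠ y) (hreach : H.Reachable x y)
    (F : Set (Sym2 V)) (hF : F ⊆ H.edgeSet) (hFκ : Cardinal.mk F ≤ κ)
    (hsep : ¬ (H.deleteEdges F).Reachable x y) :
    ¬ (G.deleteEdges F).Reachable x y := by
  subst hH hW
  have hcomm : (G.deleteEdges E₀).deleteEdges F = (G.deleteEdges F).deleteEdges E₀ := by
    simp only [SimpleGraph.deleteEdges_deleteEdges, Set.union_comm]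
  have hsub : F ∪ E₀ ⊆ G.edgeSet :=
    Set.union_subset (hF.trans (SimpleGraph.edgeSet_mono (SimpleGraph.deleteEdges_le E₀))) hE₀
  have hcard : Cardinal.mk ↑(F ∪ E₀) ≤ κ :=
    (Cardinal.mk_union_le F E₀).trans (Cardinal.add_le_of_le hκ hFκ hE₀κ)
  have hle : (G.deleteEdges F).deleteEdges E₀ ≤ G.deleteEdges E₀ :=
    hcomm ▸ SimpleGraph.deleteEdges_le F
  have hconn_endpoints : ∀ u ∈ endpoints E₀, ∀ v ∈ endpoints E₀,
      (G.deleteEdges E₀).Reachable u v → ((G.deleteEdges F).deleteEdges E₀).Reachable u v := by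
    intro u hu v hv huv
    obtain rfl | hne := eq_or_ne u v
    · exact .refl u
    · rw [SimpleGraph.deleteEdges_deleteEdges]
      exact hconn u hu v hv hne huv _ hsub hcard
  rw [hcomm] at hsep
  exact fun hG => hsep (reachable_deleteEdges_of_forall_endpoints hle hconn_endpoints hreach hG)
end
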